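/- Z-norm comparison of M and T₃ (Lemma 3.3(i), estimate (pi21)): For every h ∈ L∞(I_δ), one has ‖(M − T_{3,(f,g)})h‖_Z + ‖(M − T_{3,(g,f)})h‖_Z ≲ ε·log(1/ε)·‖h‖_{L∞(I_{2√ε})}. -/

import Mathlib

noncomputable section
open Set MeasureTheory Filter Real

/-- The principal value at `α` of the integral `∫_ℝ F(β) dβ`, understood as the limit of the
integrals over `{β : r < |α − β|}` as `r → 0⁺`. -/
def pvI (F : ℝ → ℝ) (α : ℝ) : ℝ :=
  limUnder (nhdsWithin (0:ℝ) (Ioi 0)) (fun r => ∫ β in {β : ℝ | r < |α - β|}, F β)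

/-- `ψ` is a smooth even cutoff, with values in `[0,1]`, supported in `[−1,1]`,
equal to `1` on `[−1/2,1/2]`. -/
def IsCutoff (ψ : ℝ → ℝ) : Prop :=
  ContDiff ℝ (⊤ : ℕ∞) ψ ∧ (∀ x : ℝ, ψ (-x) = ψ x) ∧ (∀ x : ℝ, ψ x ∈ Icc (0:ℝ) 1) ∧
    (∀ x : ℝ, 1 < |x| → ψ x = 0) ∧ (∀ x : ℝ, |x| ≤ 1/2 → ψ x = 1)

/-- The rescaled cutoff `ψ_r(x) = ψ(x/r)`. -/
def scut (ψ : ℝ → ℝ) (r x : ℝ) : ℝ := ψ (x / r)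

/-- `X̃(α) = 2ε + f(α) + g(α)`. -/
def Xt (ε : ℝ) (f g : ℝ → ℝ) (α : ℝ) : ℝ := 2 * ε + f α + g α

/-- The operator `T_{1,f}`. -/
def T1 (ψ : ℝ → ℝ) (ε : ℝ) (f : ℝ → ℝ) (h : ℝ → ℝ) (α : ℝ) : ℝ :=
  (2 * π)⁻¹ * pvI (fun β =>
    (f α - f β) / ((α - β) ^ 2 + (f α - f β) ^ 2) * h β * scut ψ (Real.sqrt ε) (α - β)) α

/-- The operator `T_{2,f}`. -/
def T2 (ψ : ℝ → ℝ) (ε : ℝ) (f : ℝ → ℝ) (h : ℝ → ℝ) (α : ℝ) : ℝ :=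
  (2 * π)⁻¹ * pvI (fun β =>
    (α - β) / ((α - β) ^ 2 + (f α - f β) ^ 2) * h β * scut ψ (Real.sqrt ε) (α - β)) α

/-- The operator `T_{3,(f,g)}`. -/
def T3 (ψ : ℝ → ℝ) (ε : ℝ) (f g : ℝ → ℝ) (h : ℝ → ℝ) (α : ℝ) : ℝ :=
  (2 * π)⁻¹ * ∫ β : ℝ,
    (2 * ε + f α + g β) / ((α - β) ^ 2 + (2 * ε + f α + g β) ^ 2) * h β *
      scut ψ (Real.sqrt ε) (α - β)

/-- The operator `T_{4,(f,g)}`. -/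
def T4 (ψ : ℝ → ℝ) (ε : ℝ) (f g : ℝ → ℝ) (h : ℝ → ℝ) (α : ℝ) : ℝ :=
  (2 * π)⁻¹ * ∫ β : ℝ,
    (α - β) / ((α - β) ^ 2 + (2 * ε + f α + g β) ^ 2) * h β * scut ψ (Real.sqrt ε) (α - β)

/-- The kernel of the operator `H`. -/
def Hker (ψ : ℝ → ℝ) (ε : ℝ) (f g : ℝ → ℝ) (α β : ℝ) : ℝ :=
  (α - β)⁻¹ * ((Xt ε f g α) ^ 2 / ((α - β) ^ 2 + (Xt ε f g α) ^ 2)) *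
    scut ψ (Real.sqrt ε / 2 ^ 6) α * scut ψ (Real.sqrt ε / 2 ^ 6) (α - β)

/-- The kernel of the operator `M`. -/
def Mker (ψ : ℝ → ℝ) (ε : ℝ) (f g : ℝ → ℝ) (α β : ℝ) : ℝ :=
  (Xt ε f g α) / ((α - β) ^ 2 + (Xt ε f g α) ^ 2) *
    scut ψ (Real.sqrt ε / 2 ^ 6) α * scut ψ (Real.sqrt ε / 2 ^ 6) (α - β)

/-- The operator `H` (a principal value integral in the second variable of the kernel). -/
def Hop (ψ : ℝ → ℝ) (ε : ℝ) (f g : ℝ → ℝ) (h : ℝ → ℝ) (α : ℝ) : ℝ :=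
  (2 * π)⁻¹ * pvI (fun β => Hker ψ ε f g α β * h β) α

/-- The adjoint operator `H*` (integration of the kernel of `H` in its first variable). -/
def Hstar (ψ : ℝ → ℝ) (ε : ℝ) (f g : ℝ → ℝ) (φ : ℝ → ℝ) (β : ℝ) : ℝ :=
  (2 * π)⁻¹ * pvI (fun α => Hker ψ ε f g α β * φ α) β

/-- The operator `M`. -/
def Mop (ψ : ℝ → ℝ) (ε : ℝ) (f g : ℝ → ℝ) (h : ℝ → ℝ) (α : ℝ) : ℝ :=
  (2 * π)⁻¹ * ∫ β : ℝ, Mker ψ ε f g α β * h β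

/-- The adjoint operator `M*` (integration of the kernel of `M` in its first variable). -/
def Mstar (ψ : ℝ → ℝ) (ε : ℝ) (f g : ℝ → ℝ) (φ : ℝ → ℝ) (β : ℝ) : ℝ :=
  (2 * π)⁻¹ * ∫ α : ℝ, Mker ψ ε f g α β * φ α

/-- The class `C₂` of test functions: `C¹` functions compactly supported in `I_δ = (−δ,δ)` with
`|φ⁽ᵏ⁾(α)| ≤ ε/(ε^{2+k} + |α|^{2+k})` on `I_δ` for `k ∈ {0,1}`. -/
def InC2 (δ ε : ℝ) (φ : ℝ → ℝ) : Prop :=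
  ContDiff ℝ 1 φ ∧ HasCompactSupport φ ∧ tsupport φ ⊆ Ioo (-δ) δ ∧
    ∀ α ∈ Ioo (-δ) δ,
      |φ α| ≤ ε / (ε ^ 2 + |α| ^ 2) ∧ |deriv φ α| ≤ ε / (ε ^ 3 + |α| ^ 3)

/-- The standing hypotheses on `f, g : (−δ,δ) → ℝ`: they are `C⁵`, with
`‖f‖_{C³} + ‖g‖_{C³} ≤ A`, `f(0) = f'(0) = g(0) = g'(0) = 0`, and
`f(α) + g(β) ≥ −ε` for `α, β ∈ (−4√ε, 4√ε)`. -/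
def GoodFG (δ A ε : ℝ) (f g : ℝ → ℝ) : Prop :=
  ContDiffOn ℝ 5 f (Ioo (-δ) δ) ∧ ContDiffOn ℝ 5 g (Ioo (-δ) δ) ∧
    f 0 = 0 ∧ g 0 = 0 ∧
    derivWithin f (Ioo (-δ) δ) 0 = 0 ∧ derivWithin g (Ioo (-δ) δ) 0 = 0 ∧
    (∀ x ∈ Ioo (-δ) δ, ∀ i : ℕ, i ≤ 3 →
      |iteratedDerivWithin i f (Ioo (-δ) δ) x| + |iteratedDerivWithin i g (Ioo (-δ) δ) x| ≤ A) ∧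
    (∀ α ∈ Ioo (-(4 * Real.sqrt ε)) (4 * Real.sqrt ε),
      ∀ β ∈ Ioo (-(4 * Real.sqrt ε)) (4 * Real.sqrt ε), -ε ≤ f α + g β)

lemma pvI_eq_of (F : ℝ → ℝ) (β : ℝ)
    (hint : ∀ r0 : ℝ, 0 < r0 → IntegrableOn F {x : ℝ | r0 < |β - x|})
    (hS : IntegrableOn (fun r => F (β + r) + F (β - r)) (Ioi 0)) :
    pvI F β = ∫ r in Ioi (0:ℝ), (F (β + r) + F (β - r)) := by
  have key : ∀ r0 : ℝ, 0 < r0 → ∫ x in {x : ℝ | r0 < |β - x|}, F x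
      = ∫ r in Ioi r0, (F (β + r) + F (β - r)) := by
    intro r0 h0
    have hset : {x : ℝ | r0 < |β - x|} = Iio (β - r0) ∪ Ioi (β + r0) := by
      ext x
      simp only [mem_ofPred_eq, mem_union, mem_Iio, mem_Ioi, lt_abs]
      constructor
      · rintro (h | h)
        · left; linarith
        · right; linarith
      · rintro (h | h)
        · left; linarith
        · right; linarith
    have hI := hint r0 h0
    rw [hset] at hI ⊢
    have hdis : Disjoint (Iio (β - r0)) (Ioi (β + r0)) := by
      rw [Set.disjoint_left]
      intro x hx hx'
      simp only [mem_Iio, mem_Ioi] at hx hx'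
      linarith
    have hI1 : IntegrableOn F (Iio (β - r0)) := hI.mono_set subset_union_left
    have hI2 : IntegrableOn F (Ioi (β + r0)) := hI.mono_set subset_union_right
    rw [setIntegral_union hdis measurableSet_Ioi hI1 hI2]
    have e1 : (fun x => (Iio (β - r0)).indicator F (β - x))
        = (Ioi r0).indicator (fun r => F (β - r)) := by
      ext x
      by_cases hx : r0 < x
      · rw [indicator_of_mem (by simpa using hx), indicator_of_mem (by simpa using hx)]
      · rw [indicator_of_notMem (by simpa using hx), indicator_of_notMem (by simpa using hx)]
    have e2 : (fun x => (Ioi (β + r0)).indicator F (β + x))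
        = (Ioi r0).indicator (fun r => F (β + r)) := by
      ext x
      by_cases hx : r0 < x
      · rw [indicator_of_mem (by simpa using hx), indicator_of_mem (by simpa using hx)]
      · rw [indicator_of_notMem (by simpa using hx), indicator_of_notMem (by simpa using hx)]
    have j1 : IntegrableOn (fun r => F (β - r)) (Ioi r0) := by
      rw [← integrable_indicator_iff measurableSet_Ioi, ← e1]
      exact ((integrable_indicator_iff measurableSet_Iio).2 hI1).comp_sub_left β
    have j2 : IntegrableOn (fun r => F (β + r)) (Ioi r0) := by
      rw [← integrable_indicator_iff measurableSet_Ioi, ← e2]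
      exact ((integrable_indicator_iff measurableSet_Ioi).2 hI2).comp_add_left β
    rw [integral_add j2 j1, ← integral_indicator measurableSet_Iio,
      ← integral_indicator measurableSet_Ioi, ← integral_indicator measurableSet_Ioi,
      ← integral_indicator measurableSet_Ioi, ← e1, ← e2,
      integral_sub_left_eq_self (fun x => (Iio (β - r0)).indicator F x),
      integral_add_left_eq_self (fun x => (Ioi (β + r0)).indicator F x), add_comm]
  unfold pvI
  apply Tendsto.limUnder_eq
  have hc : AECover (volume.restrict (Ioi (0:ℝ))) (nhdsWithin (0:ℝ) (Ioi 0))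
      (fun r : ℝ => Ioi r) :=
    aecover_Ioi_of_Ioi (tendsto_id.mono_left nhdsWithin_le_nhds)
  have ht := hc.integral_tendsto_of_countably_generated hS
  refine ht.congr' ?_
  filter_upwards [self_mem_nhdsWithin] with r hr
  rw [key r hr, Measure.restrict_restrict measurableSet_Ioi,
    inter_eq_left.2 (Ioi_subset_Ioi (le_of_lt hr))]

/-- The reduced hypotheses on `f`, `g`. -/
structure NiceFG (A ε : ℝ) (f g : ℝ → ℝ) : Prop where
  cf : Continuous f
  cg : Continuous g
  f0 : f 0 = 0
  g0 : g 0 = 0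
  lf : ∀ x y, |f x - f y| ≤ A * (|x| + |y|) * |x - y|
  lg : ∀ x y, |g x - g y| ≤ A * (|x| + |y|) * |x - y|
  lf' : ∀ x y, |f x - f y| ≤ 4 * A * √ε * |x - y|
  lg' : ∀ x y, |g x - g y| ≤ 4 * A * √ε * |x - y|
  lo : ∀ a b, ε ≤ 2 * ε + f a + g b
  hi : ∀ a b, 2 * ε + f a + g b ≤ 10 * A * ε

lemma NiceFG.symm {A ε : ℝ} {f g : ℝ → ℝ} (h : NiceFG A ε f g) : NiceFG A ε g f :=
  ⟨h.cg, h.cf, h.g0, h.f0, h.lg, h.lf, h.lg', h.lf',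
    fun a b => by have := h.lo b a; linarith, fun a b => by have := h.hi b a; linarith⟩

/-- Clamp to `[-c, c]`. -/
def clampR (c x : ℝ) : ℝ := max (-c) (min x c)

lemma clampR_of {c x : ℝ} (h : |x| ≤ c) : clampR c x = x := by
  obtain ⟨h1, h2⟩ := abs_le.1 h
  unfold clampR
  rw [min_eq_left h2, max_eq_right h1]

lemma clampR_abs_le {c x : ℝ} (hc : 0 ≤ c) : |clampR c x| ≤ c := by
  unfold clampR
  rw [abs_le]
  constructor
  · exact le_max_left _ _
  · exact max_le (by linarith) (min_le_right _ _)

lemma clampR_abs_le' {c x : ℝ} (hc : 0 ≤ c) : |clampR c x| ≤ |x| := by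
  unfold clampR
  rcases le_total x c with h1 | h1
  · rw [min_eq_left h1]
    rcases le_total (-c) x with h2 | h2
    · rw [max_eq_right h2]
    · rw [max_eq_left h2, abs_of_nonpos (by linarith), abs_of_nonpos (by linarith)]; linarith
  · rw [min_eq_right h1, max_eq_right (by linarith), abs_of_nonneg hc, abs_of_nonneg (by linarith)]
    exact h1

lemma clampR_lip {c x y : ℝ} : |clampR c x - clampR c y| ≤ |x - y| := by
  unfold clampR
  have h1 : |max (-c) (min x c) - max (-c) (min y c)| ≤ |min x c - min y c| := by
    rw [max_comm (-c), max_comm (-c)]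
    exact abs_max_sub_max_le_abs _ _ _
  have h2 : |min x c - min y c| ≤ |x - y| := by
    have := abs_min_sub_min_le_max x c y c
    simpa using this
  exact h1.trans h2

lemma lip_of_good {δ A : ℝ} (hδ : 0 < δ) (f : ℝ → ℝ) (hc : ContDiffOn ℝ 5 f (Ioo (-δ) δ))
    (hd0 : derivWithin f (Ioo (-δ) δ) 0 = 0)
    (hb : ∀ x ∈ Ioo (-δ) δ, |iteratedDerivWithin 2 f (Ioo (-δ) δ) x| ≤ A) :
    ∀ x ∈ Ioo (-δ) δ, ∀ y ∈ Ioo (-δ) δ, |f x - f y| ≤ A * (|x| + |y|) * |x - y| := by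
  have hu : UniqueDiffOn ℝ (Ioo (-δ) δ) := isOpen_Ioo.uniqueDiffOn
  have h0 : (0:ℝ) ∈ Ioo (-δ) δ := ⟨by linarith, hδ⟩
  have hA : 0 ≤ A := (abs_nonneg _).trans (hb 0 h0)
  have hd1 : DifferentiableOn ℝ (derivWithin f (Ioo (-δ) δ)) (Ioo (-δ) δ) :=
    (hc.derivWithin hu (m := 1) (by norm_num)).differentiableOn (by norm_num)
  have hd : DifferentiableOn ℝ f (Ioo (-δ) δ) := hc.differentiableOn (by norm_num)
  have hb1 : ∀ x ∈ Ioo (-δ) δ, |derivWithin f (Ioo (-δ) δ) x| ≤ A * |x| := by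
    intro x hx
    have := (convex_Ioo (-δ) δ).norm_image_sub_le_of_norm_derivWithin_le (C := A) hd1
      (fun z hz => by
        have := hb z hz
        rw [iteratedDerivWithin_succ, ] at this
        simp only [iteratedDerivWithin_one] at this
        simpa using this) h0 hx
    rw [hd0] at this
    simpa using this
  intro x hx y hy
  have hsub : uIcc y x ⊆ Ioo (-δ) δ := by
    have := (ordConnected_Ioo (a := -δ) (b := δ)).uIcc_subset hy hx
    exact this
  have hz : ∀ z ∈ uIcc y x, ‖deriv f z‖ ≤ A * (|x| + |y|) := by
    intro z hz
    have hz' := hsub hz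
    rw [← derivWithin_of_isOpen isOpen_Ioo hz']
    refine (hb1 z hz').trans ?_
    gcongr
    rw [mem_uIcc] at hz
    rcases hz with ⟨h1, h2⟩ | ⟨h1, h2⟩ <;>
      exact abs_le.2 ⟨by linarith [neg_abs_le x, neg_abs_le y, abs_nonneg x, abs_nonneg y],
        by linarith [le_abs_self x, le_abs_self y, abs_nonneg x, abs_nonneg y]⟩
  have := (convex_uIcc y x).norm_image_sub_le_of_norm_deriv_le (f := f)
    (fun z hz => (hd z (hsub hz)).differentiableAt (isOpen_Ioo.mem_nhds (hsub hz))) hz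
    left_mem_uIcc right_mem_uIcc
  simpa using this

lemma nice_clamp {δ A ε : ℝ} (hδ : δ ∈ Ioc (0:ℝ) (1/100)) (hA : 1 ≤ A)
    (hε : ε ∈ Ioc (0:ℝ) (δ ^ 2 / 100)) (f g : ℝ → ℝ) (h : GoodFG δ A ε f g) :
    NiceFG A ε (fun x => f (clampR (2 * √ε) x)) (fun x => g (clampR (2 * √ε) x)) := by
  obtain ⟨hf, hg, f0, g0, df0, dg0, hb, hpos⟩ := h
  have hs : 0 < √ε := Real.sqrt_pos.2 hε.1
  have hss : √ε * √ε = ε := Real.mul_self_sqrt hε.1.le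
  have hsd : √ε ≤ δ / 10 := by
    apply Real.sqrt_le_iff.2
    constructor
    · linarith [hδ.1]
    · have := hε.2; nlinarith
  have hδ0 := hδ.1
  have Lf := lip_of_good (A := A) hδ.1 f hf df0
    (fun x hx => by have := hb x hx 2 (by norm_num); linarith [abs_nonneg (iteratedDerivWithin 2 g (Ioo (-δ) δ) x)])
  have Lg := lip_of_good (A := A) hδ.1 g hg dg0
    (fun x hx => by have := hb x hx 2 (by norm_num); linarith [abs_nonneg (iteratedDerivWithin 2 f (Ioo (-δ) δ) x)])
  have hc : ∀ x, |clampR (2 * √ε) x| ≤ 2 * √ε := fun x => clampR_abs_le (by positivity)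
  have hm : ∀ x, clampR (2 * √ε) x ∈ Ioo (-δ) δ := by
    intro x
    obtain ⟨h1, h2⟩ := abs_le.1 (hc x)
    constructor <;> linarith
  have hm4 : ∀ x, clampR (2 * √ε) x ∈ Ioo (-(4 * √ε)) (4 * √ε) := by
    intro x
    obtain ⟨h1, h2⟩ := abs_le.1 (hc x)
    constructor <;> linarith
  have gen : ∀ u : ℝ → ℝ, (∀ x ∈ Ioo (-δ) δ, ∀ y ∈ Ioo (-δ) δ, |u x - u y| ≤ A * (|x| + |y|) * |x - y|) →
      (∀ x y, |u (clampR (2 * √ε) x) - u (clampR (2 * √ε) y)| ≤ A * (|x| + |y|) * |x - y|) ∧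
      (∀ x y, |u (clampR (2 * √ε) x) - u (clampR (2 * √ε) y)| ≤ 4 * A * √ε * |x - y|) := by
    intro u hu
    constructor
    · intro x y
      refine (hu _ (hm x) _ (hm y)).trans ?_
      have h1 := clampR_abs_le' (c := 2 * √ε) (x := x) (by positivity)
      have h2 := clampR_abs_le' (c := 2 * √ε) (x := y) (by positivity)
      have h3 := clampR_lip (c := 2 * √ε) (x := x) (y := y)
      gcongr
    · intro x y
      refine (hu _ (hm x) _ (hm y)).trans ?_
      have h1 := hc x
      have h2 := hc y
      have h3 := clampR_lip (c := 2 * √ε) (x := x) (y := y)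
      have : A * (|clampR (2 * √ε) x| + |clampR (2 * √ε) y|) ≤ 4 * A * √ε := by nlinarith
      gcongr
  have c0 : clampR (2 * √ε) 0 = 0 := clampR_of (by simp)
  have hcont : Continuous (clampR (2 * √ε)) := by unfold clampR; fun_prop
  have bd : ∀ u : ℝ → ℝ, u 0 = 0 → (∀ x ∈ Ioo (-δ) δ, ∀ y ∈ Ioo (-δ) δ, |u x - u y| ≤ A * (|x| + |y|) * |x - y|) →
      ∀ x, u (clampR (2 * √ε) x) ≤ 4 * A * ε := by
    intro u u0 hu x
    have h1 := hu _ (hm x) 0 (by rw [← c0]; exact hm 0)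
    rw [u0] at h1
    simp only [sub_zero, abs_zero, add_zero] at h1
    have h2 := hc x
    have h3 : A * |clampR (2 * √ε) x| * |clampR (2 * √ε) x| ≤ A * (2 * √ε) * (2 * √ε) := by gcongr
    have h4 : A * (2 * √ε) * (2 * √ε) = 4 * A * ε := by linear_combination 4 * A * hss
    linarith [le_abs_self (u (clampR (2 * √ε) x))]
  refine ⟨hf.continuousOn.comp_continuous hcont hm, hg.continuousOn.comp_continuous hcont hm,
    by simp [c0, f0], by simp [c0, g0], (gen f Lf).1, (gen g Lg).1, (gen f Lf).2, (gen g Lg).2,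
    ?_, ?_⟩
  · intro a b
    have := hpos _ (hm4 a) _ (hm4 b)
    show ε ≤ 2 * ε + f (clampR (2 * √ε) a) + g (clampR (2 * √ε) b)
    linarith
  · intro a b
    show 2 * ε + f (clampR (2 * √ε) a) + g (clampR (2 * √ε) b) ≤ _
    have h1 := bd f f0 Lf a
    have h2 := bd g g0 Lg b
    nlinarith [hε.1]

lemma cutoff_lip {ψ : ℝ → ℝ} (h : IsCutoff ψ) : ∃ K : ℝ, 0 < K ∧ ∀ x y, |ψ x - ψ y| ≤ K * |x - y| := by
  have hcs : HasCompactSupport ψ := by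
    apply HasCompactSupport.intro (isCompact_Icc (a := (-1:ℝ)) (b := 1))
    intro x hx
    apply h.2.2.2.1
    by_contra hh
    exact hx (abs_le.1 (not_lt.1 hh))
  obtain ⟨K, hK⟩ := h.1.lipschitzWith_of_hasCompactSupport hcs (by simp)
  refine ⟨K + 1, by positivity, fun x y => ?_⟩
  have := hK.dist_le_mul x y
  rw [Real.dist_eq, Real.dist_eq] at this
  nlinarith [abs_nonneg (x - y)]

lemma quot_le {B ε X r : ℝ} (hε : 0 < ε) (hB : 1 ≤ B) (h1 : ε ≤ X) (h2 : X ≤ B * ε) :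
    X ^ 2 / (r ^ 2 + X ^ 2) ≤ B ^ 2 * ε ^ 2 / (r ^ 2 + ε ^ 2) := by
  have hX : 0 < X := by linarith
  rw [div_le_div_iff₀ (by positivity) (by positivity)]
  have e1 : X ^ 2 ≤ (B * ε) ^ 2 := by gcongr
  have e2 : (1:ℝ) ≤ B ^ 2 := by nlinarith
  have e3 : X ^ 2 * r ^ 2 ≤ (B * ε) ^ 2 * r ^ 2 := by gcongr
  have e4 : 1 * (X ^ 2 * ε ^ 2) ≤ B ^ 2 * (X ^ 2 * ε ^ 2) := by gcongr
  nlinarith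

lemma quot_diff {B ε X Y r : ℝ} (hε : 0 < ε) (h1 : ε ≤ X) (h2 : X ≤ B * ε)
    (h3 : ε ≤ Y) (h4 : Y ≤ B * ε) :
    |X ^ 2 / (r ^ 2 + X ^ 2) - Y ^ 2 / (r ^ 2 + Y ^ 2)| ≤ |X - Y| * (2 * B * ε) / (r ^ 2 + ε ^ 2) := by
  have hX : 0 < X := by linarith
  have hY : 0 < Y := by linarith
  have e : X ^ 2 / (r ^ 2 + X ^ 2) - Y ^ 2 / (r ^ 2 + Y ^ 2)
      = (X - Y) * ((X + Y) * (r ^ 2 / (r ^ 2 + X ^ 2)) / (r ^ 2 + Y ^ 2)) := by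
    field_simp
    ring
  rw [e, abs_mul, mul_div_assoc |X - Y|]
  apply mul_le_mul_of_nonneg_left _ (abs_nonneg _)
  rw [abs_of_nonneg (by positivity)]
  have q : r ^ 2 / (r ^ 2 + X ^ 2) ≤ 1 := by
    rw [div_le_one (by positivity)]; nlinarith
  have q0 : 0 ≤ r ^ 2 / (r ^ 2 + X ^ 2) := by positivity
  have q1 : (X + Y) * (r ^ 2 / (r ^ 2 + X ^ 2)) ≤ 2 * B * ε := by
    calc _ ≤ (X + Y) * 1 := by gcongr
      _ ≤ _ := by linarith
  have q2 : ε ^ 2 ≤ Y ^ 2 := by gcongr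
  have : 0 ≤ 2 * B * ε := le_trans (by positivity) q1
  gcongr

/-- The symmetrised kernel. -/
def Gk (ψ : ℝ → ℝ) (ε : ℝ) (f g φ : ℝ → ℝ) (a r : ℝ) : ℝ :=
  (Xt ε f g a) ^ 2 / (r ^ 2 + (Xt ε f g a) ^ 2) * scut ψ (√ε / 2 ^ 6) a * φ a

/-- Test function hypotheses. -/
structure NiceP (ε : ℝ) (φ : ℝ → ℝ) : Prop where
  d : Differentiable ℝ φ
  b0 : ∀ x, |φ x| ≤ ε / (ε ^ 2 + x ^ 2)
  b1 : ∀ x, |deriv φ x| ≤ ε / (ε ^ 3 + |x| ^ 3)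

lemma scut_bd {ψ : ℝ → ℝ} (h : IsCutoff ψ) (r x : ℝ) : |scut ψ r x| ≤ 1 := by
  obtain ⟨h1, h2⟩ := h.2.2.1 (x / r)
  unfold scut
  rw [abs_of_nonneg h1]; exact h2

lemma scut_lip {ψ : ℝ → ℝ} {K r : ℝ} (hr : 0 < r) (h : ∀ x y, |ψ x - ψ y| ≤ K * |x - y|) (x y : ℝ) :
    |scut ψ r x - scut ψ r y| ≤ K * |x - y| / r := by
  unfold scut
  refine (h _ _).trans (le_of_eq ?_)
  rw [← sub_div, abs_div, abs_of_pos hr]; ring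

lemma Gk_bd {A ε : ℝ} {ψ : ℝ → ℝ} (hψ : IsCutoff ψ) (hA : 1 ≤ A) (hε : 0 < ε) {f g φ : ℝ → ℝ}
    (hfg : NiceFG A ε f g) (hφ : NiceP ε φ) (a r : ℝ) :
    |Gk ψ ε f g φ a r| ≤ (10 * A) ^ 2 * ε ^ 2 / (r ^ 2 + ε ^ 2) * (ε / (ε ^ 2 + a ^ 2)) := by
  unfold Gk
  rw [abs_mul, abs_mul]
  have h1 := quot_le (r := r) hε (by linarith : 1 ≤ 10 * A) (hfg.lo a a) (hfg.hi a a)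
  have h2 := scut_bd hψ (√ε / 2 ^ 6) a
  have h3 := hφ.b0 a
  have h4 : |Xt ε f g a ^ 2 / (r ^ 2 + Xt ε f g a ^ 2)| ≤ (10 * A) ^ 2 * ε ^ 2 / (r ^ 2 + ε ^ 2) := by
    rw [abs_of_nonneg (by positivity)]; exact h1
  calc _ ≤ (10 * A) ^ 2 * ε ^ 2 / (r ^ 2 + ε ^ 2) * 1 * (ε / (ε ^ 2 + a ^ 2)) := by gcongr
    _ = _ := by ring

lemma Gk_near {A ε K W V β r : ℝ} {ψ : ℝ → ℝ} (hψ : IsCutoff ψ) (hA : 1 ≤ A) (hε : 0 < ε)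
    (hK0 : 0 < K) (hK : ∀ x y, |ψ x - ψ y| ≤ K * |x - y|) {f g φ : ℝ → ℝ}
    (hfg : NiceFG A ε f g) (hφ : NiceP ε φ) (hr : 0 < r)
    (hφV : |φ (β + r)| ≤ 4 * V) (hW : ∀ x ∈ Icc (β - r) (β + r), |deriv φ x| ≤ 8 * W)
    (hVW : V ≤ √ε * W) :
    |Gk ψ ε f g φ (β + r) r - Gk ψ ε f g φ (β - r) r| ≤
      (3000 * A ^ 2 + 60000 * A ^ 2 * K) * r * W * ε * (ε / (ε ^ 2 + r ^ 2)) := by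
  have hs : 0 < √ε := Real.sqrt_pos.2 hε
  have hss : √ε * √ε = ε := Real.mul_self_sqrt hε.le
  have hV0 : 0 ≤ V := by linarith [abs_nonneg (φ (β + r))]
  have hW0 : 0 ≤ W := by
    by_contra h
    have := mul_pos_of_neg_of_neg (not_le.1 h) (neg_neg_of_pos hs)
    linarith
  set a := β + r with ha
  set b := β - r with hb
  have hab : |a - b| = 2 * r := by
    rw [show a - b = 2 * r by rw [ha, hb]; ring, abs_of_pos (by linarith)]
  have hdφ : |φ a - φ b| ≤ 8 * W * (2 * r) := by
    have := (convex_Icc b a).norm_image_sub_le_of_norm_deriv_le (f := φ) (fun z _ => hφ.d z) hW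
      (left_mem_Icc.2 (by linarith)) (right_mem_Icc.2 (by linarith))
    rw [← hab]; exact this
  have hX : |Xt ε f g a - Xt ε f g b| ≤ 16 * A * √ε * r := by
    have e : Xt ε f g a - Xt ε f g b = (f a - f b) + (g a - g b) := by unfold Xt; ring
    rw [e]
    refine (abs_add_le _ _).trans ?_
    have := hfg.lf' a b
    have := hfg.lg' a b
    rw [hab] at *
    linarith
  have hqd := quot_diff (r := r) hε (hfg.lo a a) (hfg.hi a a) (hfg.lo b b) (hfg.hi b b)
  have hqb := quot_le (r := r) hε (by linarith : 1 ≤ 10 * A) (hfg.lo b b) (hfg.hi b b)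
  change |Xt ε f g a ^ 2 / (r ^ 2 + Xt ε f g a ^ 2) - Xt ε f g b ^ 2 / (r ^ 2 + Xt ε f g b ^ 2)| ≤ |Xt ε f g a - Xt ε f g b| * _ / _ at hqd
  change Xt ε f g b ^ 2 / (r ^ 2 + Xt ε f g b ^ 2) ≤ _ at hqb
  have hqb0 : 0 ≤ Xt ε f g b ^ 2 / (r ^ 2 + Xt ε f g b ^ 2) := by positivity
  have hχ := scut_lip (r := √ε / 2 ^ 6) (by positivity) hK a b
  have hχa := scut_bd hψ (√ε / 2 ^ 6) a
  have hχb := scut_bd hψ (√ε / 2 ^ 6) b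
  unfold Gk
  rw [hab] at hχ
  generalize Xt ε f g a ^ 2 / (r ^ 2 + Xt ε f g a ^ 2) = qa at *
  generalize Xt ε f g b ^ 2 / (r ^ 2 + Xt ε f g b ^ 2) = qb at *
  generalize scut ψ (√ε / 2 ^ 6) a = ca at *
  generalize scut ψ (√ε / 2 ^ 6) b = cb at *
  have e : qa * ca * φ a - qb * cb * φ b
      = (qa - qb) * ca * φ a + qb * (ca - cb) * φ a + qb * cb * (φ a - φ b) := by ring
  have hD : 0 < r ^ 2 + ε ^ 2 := by positivity
  have t1 : |(qa - qb) * ca * φ a| ≤ 1280 * A ^ 2 * r * W * ε * (ε / (ε ^ 2 + r ^ 2)) := by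
    rw [abs_mul, abs_mul]
    calc |qa - qb| * |ca| * |φ a|
        ≤ ((16 * A * √ε * r) * (2 * (10 * A) * ε) / (r ^ 2 + ε ^ 2)) * 1 * (4 * (√ε * W)) := by
          have : |qa - qb| ≤ (16 * A * √ε * r) * (2 * (10 * A) * ε) / (r ^ 2 + ε ^ 2) := by
            refine hqd.trans ?_
            gcongr
          gcongr
          linarith
      _ = 1280 * A ^ 2 * r * W * (√ε * √ε) * (ε / (ε ^ 2 + r ^ 2)) := by
          rw [add_comm (r ^ 2)]; ring
      _ = _ := by rw [hss]
  have t2 : |qb * (ca - cb) * φ a| ≤ 51200 * A ^ 2 * K * r * W * ε * (ε / (ε ^ 2 + r ^ 2)) := by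
    rw [abs_mul, abs_mul, abs_of_nonneg hqb0]
    calc qb * |ca - cb| * |φ a|
        ≤ ((10 * A) ^ 2 * ε ^ 2 / (r ^ 2 + ε ^ 2)) * (K * (2 * r) / (√ε / 2 ^ 6)) * (4 * (√ε * W)) := by
          gcongr
          linarith
      _ = _ := by
          rw [add_comm (r ^ 2)]; field_simp; ring
  have t3 : |qb * cb * (φ a - φ b)| ≤ 1600 * A ^ 2 * r * W * ε * (ε / (ε ^ 2 + r ^ 2)) := by
    rw [abs_mul, abs_mul, abs_of_nonneg hqb0]
    calc qb * |cb| * |φ a - φ b|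
        ≤ ((10 * A) ^ 2 * ε ^ 2 / (r ^ 2 + ε ^ 2)) * 1 * (8 * W * (2 * r)) := by
          gcongr
      _ = _ := by
          rw [add_comm (r ^ 2)]; ring
  have hN : 0 ≤ r * W * ε * (ε / (ε ^ 2 + r ^ 2)) := by positivity
  have hN1 : 0 ≤ A ^ 2 * (r * W * ε * (ε / (ε ^ 2 + r ^ 2))) := by positivity
  have hN2 : 0 ≤ A ^ 2 * K * (r * W * ε * (ε / (ε ^ 2 + r ^ 2))) := by positivity
  rw [e]
  refine (abs_add_le _ _).trans ?_
  have := abs_add_le ((qa - qb) * ca * φ a) (qb * (ca - cb) * φ a)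
  nlinarith

lemma abs_sq_ge {β a : ℝ} (h : |β| / 2 ≤ |a|) : β ^ 2 / 4 ≤ a ^ 2 := by
  have : (|β| / 2) ^ 2 ≤ |a| ^ 2 := by gcongr
  rw [sq_abs, div_pow, sq_abs] at this
  linarith

lemma Gk_diff {A K : ℝ} {ψ : ℝ → ℝ} (hψ : IsCutoff ψ) (hA : 1 ≤ A)
    (hK0 : 0 < K) (hK : ∀ x y, |ψ x - ψ y| ≤ K * |x - y|) :
    ∃ C : ℝ, 0 < C ∧ ∀ ε : ℝ, 0 < ε → ε ≤ 1 → ∀ f g φ : ℝ → ℝ, NiceFG A ε f g → NiceP ε φ →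
      ∀ β r : ℝ, |β| ≤ √ε → 0 < r →
    |Gk ψ ε f g φ (β + r) r - Gk ψ ε f g φ (β - r) r| ≤
      C * r * (ε / (ε ^ 3 + |β| ^ 3)) * ε * (ε / (ε ^ 2 + r ^ 2) + ε / (ε ^ 2 + (β + r) ^ 2)
        + ε / (ε ^ 2 + (β - r) ^ 2)) := by
  refine ⟨(3000 * A ^ 2 + 60000 * A ^ 2 * K) + 1600 * A ^ 2, by positivity, ?_⟩
  intro ε hε hε1 f g φ hfg hφ β r hβ hr
  have hs : 0 < √ε := Real.sqrt_pos.2 hε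
  have hss : √ε * √ε = ε := Real.mul_self_sqrt hε.le
  have hs1 : √ε ≤ 1 := by nlinarith
  have hes : ε ≤ √ε := by nlinarith
  have hb0 := abs_nonneg β
  have hb2 : |β| ^ 2 = β ^ 2 := sq_abs β
  have p1 : 0 < ε / (ε ^ 2 + r ^ 2) := by positivity
  have p2 : 0 < ε / (ε ^ 2 + (β + r) ^ 2) := by positivity
  have p3 : 0 < ε / (ε ^ 2 + (β - r) ^ 2) := by positivity
  have hWpos : 0 < ε / (ε ^ 3 + |β| ^ 3) := by positivity
  have hVW : ε / (ε ^ 2 + β ^ 2) ≤ √ε * (ε / (ε ^ 3 + |β| ^ 3)) := by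
    rw [← mul_div_assoc, div_le_div_iff₀ (by positivity) (by positivity)]
    have e1 : ε ^ 3 ≤ √ε * ε ^ 2 := by nlinarith [sq_nonneg ε]
    have e2 : |β| ^ 3 ≤ √ε * β ^ 2 := by rw [← hb2]; nlinarith [sq_nonneg |β|]
    nlinarith
  by_cases hreg : |β| ≤ ε ∨ r ≤ |β| / 2
  · have hnear := Gk_near (W := ε / (ε ^ 3 + |β| ^ 3)) (V := ε / (ε ^ 2 + β ^ 2)) (β := β)
      hψ hA hε hK0 hK hfg hφ hr ?_ ?_ hVW
    · refine hnear.trans ?_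
      gcongr ?_ * r * _ * ε * ?_
      · nlinarith
      · linarith
    · refine (hφ.b0 _).trans ?_
      rw [← mul_div_assoc, div_le_div_iff₀ (by positivity) (by positivity)]
      rcases hreg with h | h
      · have : β ^ 2 ≤ ε ^ 2 := by rw [← hb2]; gcongr
        nlinarith [mul_pos hε (sq_pos_of_pos hε), sq_nonneg (β + r), mul_nonneg hε.le (sq_nonneg (β + r))]
      · have : |β| / 2 ≤ |β + r| := by
          have := abs_sub_abs_le_abs_sub β (-r)
          rw [abs_neg, abs_of_pos hr, sub_neg_eq_add] at this
          linarith
        have := abs_sq_ge this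
        nlinarith [mul_pos hε (sq_pos_of_pos hε)]
    · intro x hx
      refine (hφ.b1 _).trans ?_
      rw [← mul_div_assoc, div_le_div_iff₀ (by positivity) (by positivity)]
      rcases hreg with h | h
      · have : |β| ^ 3 ≤ ε ^ 3 := by gcongr
        have : 0 ≤ |x| ^ 3 := by positivity
        nlinarith [pow_pos hε 3]
      · have h1 : |β| / 2 ≤ |x| := by
          have := abs_sub_abs_le_abs_sub β (β - x)
          have h2 : |β - x| ≤ r := abs_le.2 ⟨by linarith [hx.2], by linarith [hx.1]⟩
          rw [sub_sub_cancel] at this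
          linarith
        have : (|β| / 2) ^ 3 ≤ |x| ^ 3 := by gcongr
        rw [div_pow] at this
        nlinarith [pow_pos hε 3]
  · push Not at hreg
    obtain ⟨h1, h2⟩ := hreg
    have key : ε ^ 2 / (r ^ 2 + ε ^ 2) ≤ 16 * r * (ε / (ε ^ 3 + |β| ^ 3)) * ε := by
      rw [show 16 * r * (ε / (ε ^ 3 + |β| ^ 3)) * ε = (16 * r * ε * ε) / (ε ^ 3 + |β| ^ 3) by ring,
        div_le_div_iff₀ (by positivity) (by positivity)]
      have e1 : ε ^ 3 ≤ |β| ^ 3 := by gcongr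
      have e2 : |β| ^ 3 ≤ (2 * r) ^ 3 := by
        gcongr; linarith
      have : ε ^ 3 + |β| ^ 3 ≤ 16 * r * (r ^ 2 + ε ^ 2) := by nlinarith [mul_pos hr (sq_pos_of_pos hε)]
      calc ε ^ 2 * (ε ^ 3 + |β| ^ 3) ≤ ε ^ 2 * (16 * r * (r ^ 2 + ε ^ 2)) := by gcongr
        _ = _ := by ring
    have g1 := Gk_bd hψ hA hε hfg hφ (β + r) r
    have g2 := Gk_bd hψ hA hε hfg hφ (β - r) r
    rw [mul_div_assoc] at g1 g2
    have g1' : |Gk ψ ε f g φ (β + r) r| ≤ (10 * A) ^ 2 * (16 * r * (ε / (ε ^ 3 + |β| ^ 3)) * ε) * (ε / (ε ^ 2 + (β + r) ^ 2)) :=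
      g1.trans (by gcongr)
    have g2' : |Gk ψ ε f g φ (β - r) r| ≤ (10 * A) ^ 2 * (16 * r * (ε / (ε ^ 3 + |β| ^ 3)) * ε) * (ε / (ε ^ 2 + (β - r) ^ 2)) :=
      g2.trans (by gcongr)
    refine (abs_sub _ _).trans ?_
    calc _ ≤ (1600 * A ^ 2) * r * (ε / (ε ^ 3 + |β| ^ 3)) * ε * (ε / (ε ^ 2 + (β + r) ^ 2)
        + ε / (ε ^ 2 + (β - r) ^ 2)) := by linarith
      _ ≤ _ := by
        gcongr ?_ * r * _ * ε * ?_
        · have : 0 ≤ 3000 * A ^ 2 + 60000 * A ^ 2 * K := by positivity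
          linarith
        · linarith

lemma cauchy_int {ε : ℝ} (hε : 0 < ε) :
    Integrable (fun x : ℝ => ε / (ε ^ 2 + x ^ 2)) ∧ ∫ x : ℝ, ε / (ε ^ 2 + x ^ 2) = π := by
  have e : (fun x : ℝ => ε / (ε ^ 2 + x ^ 2)) = fun x : ℝ => ε⁻¹ * (1 + (x / ε) ^ 2)⁻¹ := by
    ext x
    field_simp
  rw [e]
  constructor
  · apply Integrable.const_mul
    exact integrable_inv_one_add_sq.comp_div hε.ne'
  · rw [integral_const_mul, Measure.integral_comp_div (fun x : ℝ => (1 + x ^ 2)⁻¹) ε,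
      integral_univ_inv_one_add_sq, abs_of_pos hε, smul_eq_mul]
    field_simp

lemma scut_even {ψ : ℝ → ℝ} (h : IsCutoff ψ) (r x : ℝ) : scut ψ r (-x) = scut ψ r x := by
  unfold scut
  rw [neg_div, h.2.1]

lemma scut_zero {ψ : ℝ → ℝ} (h : IsCutoff ψ) {r x : ℝ} (hr : 0 < r) (hx : r < |x|) :
    scut ψ r x = 0 := by
  apply h.2.2.2.1
  rw [abs_div, abs_of_pos hr, lt_div_iff₀ hr]; linarith

lemma scut_one {ψ : ℝ → ℝ} (h : IsCutoff ψ) {r x : ℝ} (hr : 0 < r) (hx : |x| ≤ r / 2) :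
    scut ψ r x = 1 := by
  apply h.2.2.2.2
  rw [abs_div, abs_of_pos hr, div_le_iff₀ hr]; linarith

/-- symmetrised integrand -/
def Sk (ψ : ℝ → ℝ) (ε : ℝ) (f g φ : ℝ → ℝ) (β r : ℝ) : ℝ :=
  r⁻¹ * scut ψ (√ε / 2 ^ 6) r * (Gk ψ ε f g φ (β + r) r - Gk ψ ε f g φ (β - r) r)

lemma Sk_eq {ψ : ℝ → ℝ} (hψ : IsCutoff ψ) (ε : ℝ) (f g φ : ℝ → ℝ) (β r : ℝ) :
    Hker ψ ε f g (β + r) β * φ (β + r) + Hker ψ ε f g (β - r) β * φ (β - r) = Sk ψ ε f g φ β r := by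
  unfold Sk Gk Hker
  rw [show β + r - β = r by ring, show β - r - β = -r by ring, scut_even hψ, neg_sq, inv_neg]
  ring

lemma Sk_zero {ψ : ℝ → ℝ} (hψ : IsCutoff ψ) {ε : ℝ} (hε : 0 < ε) (f g φ : ℝ → ℝ) {β r : ℝ}
    (hr : 0 < r) (h : √ε < |β| * 32 ∨ √ε < r) : Sk ψ ε f g φ β r = 0 := by
  have hs : 0 < √ε := Real.sqrt_pos.2 hε
  have hs' : 0 < √ε / 2 ^ 6 := by positivity
  unfold Sk
  by_cases h1 : √ε / 2 ^ 6 < r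
  · rw [scut_zero hψ hs' (by rw [abs_of_pos hr]; exact h1)]; ring
  · rcases h with h | h
    · have a1 : √ε / 2 ^ 6 < |β + r| := by
        have := abs_sub_abs_le_abs_sub β (-r)
        rw [abs_neg, abs_of_pos hr, sub_neg_eq_add] at this
        norm_num at *
        linarith
      have a2 : √ε / 2 ^ 6 < |β - r| := by
        have := abs_sub_abs_le_abs_sub β r
        rw [abs_of_pos hr] at this
        norm_num at *
        linarith
      unfold Gk
      rw [scut_zero hψ hs' a1, scut_zero hψ hs' a2]; ring
    · exfalso
      norm_num at h1
      linarith

lemma Sk_bd {A : ℝ} (hA : 1 ≤ A) {ψ : ℝ → ℝ} (hψ : IsCutoff ψ) :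
    ∃ C : ℝ, 0 < C ∧ ∀ ε : ℝ, 0 < ε → ε ≤ 1 → ∀ f g φ : ℝ → ℝ, NiceFG A ε f g → NiceP ε φ →
      ∀ β r : ℝ, 0 < r → |Sk ψ ε f g φ β r| ≤
      C * (ε / (ε ^ 3 + |β| ^ 3)) * ε * (ε / (ε ^ 2 + r ^ 2) + ε / (ε ^ 2 + (β + r) ^ 2)
        + ε / (ε ^ 2 + (β - r) ^ 2)) := by
  obtain ⟨K, hK0, hK⟩ := cutoff_lip hψ
  obtain ⟨C, hC0, hC⟩ := Gk_diff hψ hA hK0 hK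
  refine ⟨C, hC0, ?_⟩
  intro ε hε hε1 f g φ hfg hφ β r hr
  by_cases hβ : |β| ≤ √ε
  · have h1 := hC ε hε hε1 f g φ hfg hφ β r hβ hr
    unfold Sk
    rw [abs_mul, abs_mul, abs_of_pos (inv_pos.2 hr)]
    calc _ ≤ r⁻¹ * 1 * (C * r * (ε / (ε ^ 3 + |β| ^ 3)) * ε * (ε / (ε ^ 2 + r ^ 2) + ε / (ε ^ 2 + (β + r) ^ 2)
        + ε / (ε ^ 2 + (β - r) ^ 2))) := by
          gcongr
          exact scut_bd hψ _ _
      _ = _ := by field_simp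
  · rw [Sk_zero hψ hε f g φ hr (Or.inl (by linarith [abs_nonneg β])), abs_zero]
    positivity

lemma Gk_meas {A ε : ℝ} {ψ : ℝ → ℝ} (hψ : IsCutoff ψ) {f g φ : ℝ → ℝ}
    (hfg : NiceFG A ε f g) (hφ : NiceP ε φ) :
    Measurable (fun p : ℝ × ℝ => Gk ψ ε f g φ p.1 p.2) := by
  have h1 : Measurable f := hfg.cf.measurable
  have h2 : Measurable g := hfg.cg.measurable
  have h3 : Measurable φ := hφ.d.continuous.measurable
  have h4 : Measurable ψ := hψ.1.continuous.measurable
  unfold Gk Xt scut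
  fun_prop

lemma Sk_meas {A ε : ℝ} {ψ : ℝ → ℝ} (hψ : IsCutoff ψ) {f g φ : ℝ → ℝ}
    (hfg : NiceFG A ε f g) (hφ : NiceP ε φ) :
    Measurable (fun p : ℝ × ℝ => Sk ψ ε f g φ p.1 p.2) := by
  have h := Gk_meas hψ hfg hφ
  have h4 : Measurable ψ := hψ.1.continuous.measurable
  have a1 : Measurable (fun p : ℝ × ℝ => Gk ψ ε f g φ (p.1 + p.2) p.2) :=
    h.comp (f := fun p : ℝ × ℝ => (p.1 + p.2, p.2)) (by fun_prop)
  have a2 : Measurable (fun p : ℝ × ℝ => Gk ψ ε f g φ (p.1 - p.2) p.2) :=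
    h.comp (f := fun p : ℝ × ℝ => (p.1 - p.2, p.2)) (by fun_prop)
  unfold Sk scut
  fun_prop

lemma Gk_int {A ε : ℝ} (hA : 1 ≤ A) (hε : 0 < ε) {ψ : ℝ → ℝ} (hψ : IsCutoff ψ) {f g φ : ℝ → ℝ}
    (hfg : NiceFG A ε f g) (hφ : NiceP ε φ) (r : ℝ) :
    Integrable (fun a => Gk ψ ε f g φ a r) := by
  refine Integrable.mono' (((cauchy_int hε).1).const_mul ((10 * A) ^ 2 * ε ^ 2 / (r ^ 2 + ε ^ 2)))
    ?_ ?_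
  · exact ((Gk_meas hψ hfg hφ).comp (f := fun a : ℝ => (a, r)) (by fun_prop)).aestronglyMeasurable
  · exact Eventually.of_forall fun a => Gk_bd hψ hA hε hfg hφ a r

lemma Sk_int_zero {A ε : ℝ} (hA : 1 ≤ A) (hε : 0 < ε) {ψ : ℝ → ℝ} (hψ : IsCutoff ψ) {f g φ : ℝ → ℝ}
    (hfg : NiceFG A ε f g) (hφ : NiceP ε φ) (r : ℝ) :
    ∫ β, Sk ψ ε f g φ β r = 0 := by
  unfold Sk
  have h := Gk_int hA hε hψ hfg hφ r
  rw [integral_const_mul, integral_sub (h.comp_add_right r) (h.comp_sub_right r),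
    integral_add_right_eq_self (fun a => Gk ψ ε f g φ a r),
    integral_sub_right_eq_self (fun a => Gk ψ ε f g φ a r)]
  simp

lemma P_le {ε x : ℝ} (hε : 0 < ε) : ε / (ε ^ 2 + x ^ 2) ≤ 1 / ε := by
  rw [div_le_div_iff₀ (by positivity) hε]; nlinarith [sq_nonneg x]

lemma W_le {ε x : ℝ} (hε : 0 < ε) : ε / (ε ^ 3 + |x| ^ 3) ≤ 1 / ε ^ 2 := by
  have : 0 ≤ |x| ^ 3 := by positivity
  rw [div_le_div_iff₀ (by positivity) (by positivity)]; nlinarith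

lemma hstar_facts {A : ℝ} (hA : 1 ≤ A) {ψ : ℝ → ℝ} (hψ : IsCutoff ψ) :
    ∃ C : ℝ, 0 < C ∧ ∀ ε : ℝ, 0 < ε → ε ≤ 1 → ∀ f g φ : ℝ → ℝ, NiceFG A ε f g → NiceP ε φ →
      Integrable (Hstar ψ ε f g φ) ∧ ∫ β, Hstar ψ ε f g φ β = 0 ∧
      (∀ β, |Hstar ψ ε f g φ β| ≤ C * (ε ^ 2 / (ε ^ 3 + |β| ^ 3))) ∧
      (∀ β, √ε < |β| * 32 → Hstar ψ ε f g φ β = 0) := by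
  obtain ⟨C, hC0, hC⟩ := Sk_bd hA hψ
  refine ⟨(2 * π)⁻¹ * (3 * π * C), by positivity, ?_⟩
  intro ε hε hε1 f g φ hfg hφ
  have hs : 0 < √ε := Real.sqrt_pos.2 hε
  have hbd := hC ε hε hε1 f g φ hfg hφ
  have hmeas := Sk_meas hψ hfg hφ
  obtain ⟨ci, cv⟩ := cauchy_int hε
  -- integrability of the dominating function
  have hdom : ∀ β, Integrable (fun r => C * (ε / (ε ^ 3 + |β| ^ 3)) * ε * (ε / (ε ^ 2 + r ^ 2) + ε / (ε ^ 2 + (β + r) ^ 2)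
        + ε / (ε ^ 2 + (β - r) ^ 2))) := fun β =>
    ((ci.add (ci.comp_add_left β)).add (ci.comp_sub_left β)).const_mul _
  have hdomv : ∀ β, ∫ r : ℝ, C * (ε / (ε ^ 3 + |β| ^ 3)) * ε * (ε / (ε ^ 2 + r ^ 2) + ε / (ε ^ 2 + (β + r) ^ 2)
        + ε / (ε ^ 2 + (β - r) ^ 2)) = C * (ε / (ε ^ 3 + |β| ^ 3)) * ε * (π + π + π) := by
    intro β
    have i12 : Integrable (fun r : ℝ => ε / (ε ^ 2 + r ^ 2) + ε / (ε ^ 2 + (β + r) ^ 2)) :=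
      ci.add (ci.comp_add_left β)
    rw [integral_const_mul, integral_add i12 (ci.comp_sub_left β),
      integral_add ci (ci.comp_add_left β),
      integral_sub_left_eq_self (fun r : ℝ => ε / (ε ^ 2 + r ^ 2)),
      integral_add_left_eq_self (fun r : ℝ => ε / (ε ^ 2 + r ^ 2)), cv]
  have hSint : ∀ β, IntegrableOn (fun r => Sk ψ ε f g φ β r) (Ioi 0) := by
    intro β
    refine Integrable.mono' (hdom β).integrableOn ?_ ?_
    · exact (hmeas.comp (f := fun r : ℝ => (β, r)) (by fun_prop)).aestronglyMeasurable
    · exact (ae_restrict_mem measurableSet_Ioi).mono fun r hr => hbd β r hr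
  have hrep : ∀ β, Hstar ψ ε f g φ β = (2 * π)⁻¹ * ∫ r in Ioi (0:ℝ), Sk ψ ε f g φ β r := by
    intro β
    unfold Hstar
    rw [pvI_eq_of]
    · simp_rw [Sk_eq hψ]
    · intro r0 hr0
      have hm : MeasurableSet {x : ℝ | r0 < |β - x|} := by
        apply measurableSet_lt <;> fun_prop
      have hφi : Integrable φ := by
        refine Integrable.mono' ci hφ.d.continuous.aestronglyMeasurable ?_
        exact Eventually.of_forall fun a => hφ.b0 a
      refine Integrable.mono' ((hφi.norm.const_mul r0⁻¹).integrableOn) ?_ ?_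
      · have h1 : Measurable f := hfg.cf.measurable
        have h2 : Measurable g := hfg.cg.measurable
        have h3 : Measurable φ := hφ.d.continuous.measurable
        have h4 : Measurable ψ := hψ.1.continuous.measurable
        apply Measurable.aestronglyMeasurable
        unfold Hker Xt scut
        fun_prop
      · refine (ae_restrict_mem hm).mono fun a ha => ?_
        have ha' : r0 < |β - a| := ha
        rw [norm_mul]
        apply mul_le_mul_of_nonneg_right _ (norm_nonneg _)
        unfold Hker
        rw [Real.norm_eq_abs, abs_mul, abs_mul, abs_mul, abs_inv, abs_sub_comm]
        have hX : 0 < Xt ε f g a := lt_of_lt_of_le hε (hfg.lo a a)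
        have q : |Xt ε f g a ^ 2 / ((a - β) ^ 2 + Xt ε f g a ^ 2)| ≤ 1 := by
          rw [abs_of_nonneg (by positivity), div_le_one (by positivity)]
          nlinarith [sq_nonneg (a - β)]
        calc _ ≤ r0⁻¹ * 1 * 1 * 1 := by
              gcongr
              · exact scut_bd hψ _ _
              · exact scut_bd hψ _ _
          _ = r0⁻¹ := by ring
    · simp_rw [Sk_eq hψ]
      exact hSint β
  have hprod : Integrable (fun p : ℝ × ℝ => Sk ψ ε f g φ p.1 p.2)
      (volume.prod (volume.restrict (Ioi 0))) := by
    set B := C * (1 / ε ^ 2) * ε * (1 / ε + 1 / ε + 1 / ε) with hB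
    have hi : Integrable (fun p : ℝ × ℝ => (Icc (-√ε) √ε).indicator (fun _ => B) p.1 *
        (Icc (-√ε) √ε).indicator (fun _ => (1:ℝ)) p.2) (volume.prod (volume.restrict (Ioi 0))) := by
      apply Integrable.mul_prod
      · rw [integrable_indicator_iff measurableSet_Icc]
        exact integrableOn_const (by simp)
      · apply Integrable.integrableOn
        rw [integrable_indicator_iff measurableSet_Icc]
        exact integrableOn_const (by simp)
    refine Integrable.mono' hi hmeas.aestronglyMeasurable ?_
    have : ∀ᵐ p ∂((volume : Measure ℝ).prod ((volume : Measure ℝ).restrict (Ioi 0))), 0 < p.2 := by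
      have : ∀ᵐ r ∂((volume : Measure ℝ).restrict (Ioi 0)), 0 < r := ae_restrict_mem measurableSet_Ioi
      exact Measure.quasiMeasurePreserving_snd.ae this
    filter_upwards [this] with p hp
    by_cases hz : √ε < |p.1| * 32 ∨ √ε < p.2
    · rw [Sk_zero hψ hε f g φ hp hz, norm_zero]
      apply mul_nonneg
      · apply indicator_nonneg; intro _ _; positivity
      · apply indicator_nonneg; intro _ _; positivity
    · push Not at hz
      rw [indicator_of_mem (show p.1 ∈ Icc (-√ε) √ε from abs_le.1 (by linarith [abs_nonneg p.1])),
        indicator_of_mem (show p.2 ∈ Icc (-√ε) √ε from ⟨by linarith, hz.2⟩), mul_one]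
      refine (hbd _ _ hp).trans ?_
      rw [hB]
      gcongr C * ?_ * ε * (?_ + ?_ + ?_)
      · exact W_le hε
      · exact P_le hε
      · exact P_le hε
      · exact P_le hε
  have hfun : Hstar ψ ε f g φ = fun β => (2 * π)⁻¹ * ∫ r in Ioi (0:ℝ), Sk ψ ε f g φ β r := funext hrep
  refine ⟨?_, ?_, ?_, ?_⟩
  · rw [hfun]
    exact hprod.integral_prod_left.const_mul _
  · rw [hfun, integral_const_mul, integral_integral_swap hprod]
    simp_rw [Sk_int_zero hA hε hψ hfg hφ]
    simp
  · intro β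
    rw [hrep, abs_mul, abs_of_pos (by positivity : 0 < (2 * π)⁻¹), mul_assoc]
    gcongr
    have h1 : |∫ r in Ioi (0:ℝ), Sk ψ ε f g φ β r| ≤ ∫ r in Ioi (0:ℝ), C * (ε / (ε ^ 3 + |β| ^ 3)) * ε * (ε / (ε ^ 2 + r ^ 2) + ε / (ε ^ 2 + (β + r) ^ 2)
        + ε / (ε ^ 2 + (β - r) ^ 2)) := by
      rw [← Real.norm_eq_abs]
      refine norm_integral_le_of_norm_le (hdom β).integrableOn ?_
      exact (ae_restrict_mem measurableSet_Ioi).mono fun r hr => hbd β r hr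
    have h2 := setIntegral_le_integral (s := Ioi (0:ℝ)) (hdom β) (Eventually.of_forall fun r => by
      show 0 ≤ C * (ε / (ε ^ 3 + |β| ^ 3)) * ε * (ε / (ε ^ 2 + r ^ 2) + ε / (ε ^ 2 + (β + r) ^ 2)
        + ε / (ε ^ 2 + (β - r) ^ 2))
      positivity)
    rw [hdomv] at h2
    refine (h1.trans h2).trans (le_of_eq ?_)
    ring
  · intro β hβ
    rw [hrep, setIntegral_congr_fun (g := fun _ => (0:ℝ)) measurableSet_Ioi
      (fun r hr => Sk_zero hψ hε f g φ hr (Or.inl hβ))]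
    simp

lemma k_nonneg {ε Y r : ℝ} (hε : 0 < ε) (h1 : ε ≤ Y) : 0 ≤ Y / (r ^ 2 + Y ^ 2) := by
  have : 0 < Y := by linarith
  positivity

lemma k_le {B ε Y r : ℝ} (hε : 0 < ε) (h1 : ε ≤ Y) (h2 : Y ≤ B * ε) :
    Y / (r ^ 2 + Y ^ 2) ≤ B * (ε / (ε ^ 2 + r ^ 2)) := by
  have : 0 < Y := by linarith
  have h3 : ε ^ 2 ≤ Y ^ 2 := by gcongr
  calc Y / (r ^ 2 + Y ^ 2) ≤ (B * ε) / (r ^ 2 + ε ^ 2) := by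
        gcongr
        linarith
    _ = _ := by rw [add_comm, mul_div_assoc]

lemma k_diff1 {ε X Y r : ℝ} (hε : 0 < ε) (h1 : ε ≤ X) (h2 : ε ≤ Y) :
    |X / (r ^ 2 + X ^ 2) - Y / (r ^ 2 + Y ^ 2)| ≤ |X - Y| / (r ^ 2 + ε ^ 2) := by
  have hX : 0 < X := by linarith
  have hY : 0 < Y := by linarith
  have e : X / (r ^ 2 + X ^ 2) - Y / (r ^ 2 + Y ^ 2)
      = (X - Y) * ((r ^ 2 - X * Y) / ((r ^ 2 + X ^ 2) * (r ^ 2 + Y ^ 2))) := by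
    field_simp
    ring
  rw [e, abs_mul, div_eq_mul_inv |X - Y|]
  apply mul_le_mul_of_nonneg_left _ (abs_nonneg _)
  rw [abs_div, abs_of_pos (by positivity : 0 < (r ^ 2 + X ^ 2) * (r ^ 2 + Y ^ 2)), ← one_div,
    div_le_div_iff₀ (by positivity) (by positivity)]
  have h3 : |r ^ 2 - X * Y| ≤ r ^ 2 + X * Y := by
    rw [abs_le]
    constructor <;> nlinarith [sq_nonneg r, mul_pos hX hY]
  have h4 : ε ^ 2 ≤ X * Y := by nlinarith
  have h5 : X * Y + ε ^ 2 ≤ X ^ 2 + Y ^ 2 := by nlinarith [sq_nonneg (X - Y)]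
  have h6 : r ^ 2 * (X * Y + ε ^ 2) ≤ r ^ 2 * (X ^ 2 + Y ^ 2) := by gcongr
  have h7 : (X * Y) * ε ^ 2 ≤ (X * Y) * (X * Y) := by gcongr
  calc |r ^ 2 - X * Y| * (r ^ 2 + ε ^ 2) ≤ (r ^ 2 + X * Y) * (r ^ 2 + ε ^ 2) := by gcongr
    _ ≤ _ := by nlinarith

lemma k_im (X r : ℝ) : X / (r ^ 2 + X ^ 2) = -((⟨r, X⟩ : ℂ)⁻¹).im := by
  rw [Complex.inv_im, Complex.normSq_mk, neg_div, neg_neg, pow_two, pow_two]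

lemma inv_bd {ρ X r : ℝ} (hρ : 0 < ρ) (h : ρ ≤ |r|) : (⟨r, X⟩ : ℂ) ≠ 0 ∧ ‖(⟨r, X⟩ : ℂ)⁻¹‖ ≤ ρ⁻¹ := by
  have h1 : |r| ≤ ‖(⟨r, X⟩ : ℂ)‖ := Complex.abs_re_le_norm (⟨r, X⟩ : ℂ)
  constructor
  · intro h0
    rw [h0, norm_zero] at h1
    linarith
  · rw [norm_inv]
    gcongr
    linarith

lemma k_double {X Y X0 Y0 r r0 ρ d e m : ℝ} (hρ : 0 < ρ) (hr : ρ ≤ |r|) (hr0 : ρ ≤ |r0|)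
    (hX : |r - r0| + |X - X0| ≤ d) (hY : |r - r0| + |Y - Y0| ≤ d)
    (he : |(X - Y) - (X0 - Y0)| ≤ e) (hm : |X0 - Y0| ≤ m) :
    |(X / (r ^ 2 + X ^ 2) - Y / (r ^ 2 + Y ^ 2)) - (X0 / (r0 ^ 2 + X0 ^ 2) - Y0 / (r0 ^ 2 + Y0 ^ 2))|
      ≤ e * (ρ⁻¹ * ρ⁻¹) + m * (2 * d * (ρ⁻¹ * ρ⁻¹ * ρ⁻¹)) := by
  obtain ⟨z0, hz⟩ := inv_bd (X := X) hρ hr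
  obtain ⟨w0, hw⟩ := inv_bd (X := Y) hρ hr
  obtain ⟨z00, hz0⟩ := inv_bd (X := X0) hρ hr0
  obtain ⟨w00, hw0⟩ := inv_bd (X := Y0) hρ hr0
  have n1 : ‖((⟨r, Y⟩ : ℂ) - ⟨r, X⟩) - (⟨r0, Y0⟩ - ⟨r0, X0⟩)‖ ≤ e := by
    refine (Complex.norm_le_abs_re_add_abs_im _).trans ?_
    simp only [Complex.sub_re, Complex.sub_im, sub_self, abs_zero, zero_add]
    rw [show (Y - X) - (Y0 - X0) = -((X - Y) - (X0 - Y0)) by ring, abs_neg]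
    exact he
  have n2 : ‖(⟨r0, Y0⟩ : ℂ) - ⟨r0, X0⟩‖ ≤ m := by
    refine (Complex.norm_le_abs_re_add_abs_im _).trans ?_
    simp only [Complex.sub_re, Complex.sub_im, sub_self, abs_zero, zero_add]
    rw [abs_sub_comm]; exact hm
  have n3 : ‖(⟨r0, Y0⟩ : ℂ) - ⟨r, Y⟩‖ ≤ d := by
    refine (Complex.norm_le_abs_re_add_abs_im _).trans ?_
    simp only [Complex.sub_re, Complex.sub_im]
    rw [abs_sub_comm r0, abs_sub_comm Y0]; exact hY
  have n4 : ‖(⟨r0, X0⟩ : ℂ) - ⟨r, X⟩‖ ≤ d := by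
    refine (Complex.norm_le_abs_re_add_abs_im _).trans ?_
    simp only [Complex.sub_re, Complex.sub_im]
    rw [abs_sub_comm r0, abs_sub_comm X0]; exact hX
  rw [k_im, k_im, k_im, k_im]
  generalize (⟨r, X⟩ : ℂ) = z at *
  generalize (⟨r, Y⟩ : ℂ) = w at *
  generalize (⟨r0, X0⟩ : ℂ) = z' at *
  generalize (⟨r0, Y0⟩ : ℂ) = w' at *
  have hd : 0 ≤ d := (norm_nonneg _).trans n3
  have hm0 : 0 ≤ m := (norm_nonneg _).trans n2
  have he0 : 0 ≤ e := (norm_nonneg _).trans n1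
  have e1 : (-z⁻¹.im - -w⁻¹.im) - (-z'⁻¹.im - -w'⁻¹.im) =
      -(((w - z) - (w' - z')) * (z⁻¹ * w⁻¹) + (w' - z') * ((z⁻¹ * w⁻¹ * w'⁻¹) * (w' - w) +
        (z⁻¹ * z'⁻¹ * w'⁻¹) * (z' - z))).im := by
    rw [← Complex.neg_im, ← Complex.neg_im, ← Complex.neg_im, ← Complex.neg_im, ← Complex.sub_im,
      ← Complex.sub_im, ← Complex.sub_im, ← Complex.neg_im]
    congr 1
    field_simp
    ring
  rw [e1, abs_neg]
  refine (Complex.abs_im_le_norm _).trans ?_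
  refine (norm_add_le _ _).trans ?_
  rw [norm_mul, norm_mul, norm_mul]
  have h3 : ‖(z⁻¹ * w⁻¹ * w'⁻¹) * (w' - w) + (z⁻¹ * z'⁻¹ * w'⁻¹) * (z' - z)‖ ≤
      2 * d * (ρ⁻¹ * ρ⁻¹ * ρ⁻¹) := by
    refine (norm_add_le _ _).trans ?_
    rw [norm_mul, norm_mul, norm_mul, norm_mul, norm_mul, norm_mul]
    calc _ ≤ ρ⁻¹ * ρ⁻¹ * ρ⁻¹ * d + ρ⁻¹ * ρ⁻¹ * ρ⁻¹ * d := by gcongr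
      _ = _ := by ring
  gcongr

lemma k_diff2 {A B ε Y Y0 r r0 t a : ℝ} (hA : 1 ≤ A) (hB : 1 ≤ B) (hε : 0 < ε) (hε1 : ε ≤ 1)
    (ht : 0 < t) (ha : 0 ≤ a)
    (hr : t / 2 ≤ |r|) (hr' : |r| ≤ 3 * t / 2) (hr0 : |r0| = t) (hrr : |r - r0| ≤ a)
    (h1 : ε ≤ Y) (h2 : Y ≤ B * ε) (h3 : ε ≤ Y0) (h4 : Y0 ≤ B * ε)
    (hY : |Y - Y0| ≤ 2 * A * a * t) (hεt : ε ≤ 40000 * t ^ 2) :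
    |Y / (r ^ 2 + Y ^ 2) - Y0 / (r0 ^ 2 + Y0 ^ 2)| ≤ (8 * A + 160000 * B * (3 + 4 * A * B)) * (a / t) := by
  have hYp : 0 < Y := by linarith
  have hY0p : 0 < Y0 := by linarith
  have hr2 : t ^ 2 / 4 ≤ r ^ 2 + Y ^ 2 := by
    have : (t / 2) ^ 2 ≤ |r| ^ 2 := by gcongr
    rw [sq_abs] at this
    nlinarith [sq_nonneg Y]
  have hr02 : t ^ 2 ≤ r0 ^ 2 + Y0 ^ 2 := by
    rw [← hr0, sq_abs]; nlinarith [sq_nonneg Y0]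
  have hDp : 0 < r ^ 2 + Y ^ 2 := by positivity
  have hD0p : 0 < r0 ^ 2 + Y0 ^ 2 := by positivity
  have e : Y / (r ^ 2 + Y ^ 2) - Y0 / (r0 ^ 2 + Y0 ^ 2) = (Y - Y0) / (r ^ 2 + Y ^ 2)
      + Y0 * ((r0 - r) * (r0 + r) + (Y0 - Y) * (Y0 + Y)) / ((r ^ 2 + Y ^ 2) * (r0 ^ 2 + Y0 ^ 2)) := by
    field_simp
    ring
  rw [e]
  refine (abs_add_le _ _).trans ?_
  have t1 : |(Y - Y0) / (r ^ 2 + Y ^ 2)| ≤ 8 * A * (a / t) := by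
    rw [abs_div, abs_of_pos hDp]
    calc _ ≤ (2 * A * a * t) / (t ^ 2 / 4) := by gcongr
      _ = _ := by field_simp; ring
  have t2 : |Y0 * ((r0 - r) * (r0 + r) + (Y0 - Y) * (Y0 + Y)) / ((r ^ 2 + Y ^ 2) * (r0 ^ 2 + Y0 ^ 2))|
      ≤ 160000 * B * (3 + 4 * A * B) * (a / t) := by
    rw [abs_div, abs_mul, abs_of_pos hY0p, abs_of_pos (mul_pos hDp hD0p)]
    have u1 : |(r0 - r) * (r0 + r)| ≤ 3 * a * t := by
      rw [abs_mul, abs_sub_comm]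
      have : |r0 + r| ≤ 3 * t := (abs_add_le _ _).trans (by rw [hr0]; linarith)
      calc _ ≤ a * (3 * t) := by gcongr
        _ = _ := by ring
    have u2 : |(Y0 - Y) * (Y0 + Y)| ≤ 4 * A * B * a * t := by
      rw [abs_mul, abs_sub_comm, abs_of_pos (by linarith : 0 < Y0 + Y)]
      have : Y0 + Y ≤ 2 * B := by nlinarith
      calc _ ≤ (2 * A * a * t) * (2 * B) := by gcongr
        _ = _ := by ring
    have u3 : |(r0 - r) * (r0 + r) + (Y0 - Y) * (Y0 + Y)| ≤ (3 + 4 * A * B) * a * t := by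
      refine (abs_add_le _ _).trans ?_
      linarith
    have u4 : Y0 ≤ B * (40000 * t ^ 2) := h4.trans (by gcongr)
    calc _ ≤ (B * (40000 * t ^ 2)) * ((3 + 4 * A * B) * a * t) / ((t ^ 2 / 4) * t ^ 2) := by gcongr
      _ = _ := by field_simp; ring
  calc _ ≤ _ := add_le_add t1 t2
    _ = _ := by ring

/-- kernel of the difference -/
def Ek (ψ : ℝ → ℝ) (ε : ℝ) (f g : ℝ → ℝ) (α β : ℝ) : ℝ :=
  (2 * ε + f α + g α) / ((α - β) ^ 2 + (2 * ε + f α + g α) ^ 2) * scut ψ (√ε / 2 ^ 6) (α - β) -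
  (2 * ε + f α + g β) / ((α - β) ^ 2 + (2 * ε + f α + g β) ^ 2) * scut ψ (√ε) (α - β)

/-- log kernel -/
def kk (ε : ℝ) (x : ℝ) : ℝ := (Icc (-(1/2) : ℝ) (1/2)).indicator (fun x => 1 / (|x| + ε)) x

lemma Ek_near {A ε ρ a β : ℝ} (hA : 1 ≤ A) {ψ : ℝ → ℝ} (hψ : IsCutoff ψ) (hε : 0 < ε)
    {f g : ℝ → ℝ} (hfg : NiceFG A ε f g) (hρ : |a| + |β| ≤ 3 * ρ) :
    |Ek ψ ε f g a β| ≤ 6 * A * ρ * (1 / (|a - β| + ε)) + 163840 * A := by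
  have hs : 0 < √ε := Real.sqrt_pos.2 hε
  have hss : √ε * √ε = ε := Real.mul_self_sqrt hε.le
  have hρ0 : 0 ≤ ρ := by linarith [abs_nonneg a, abs_nonneg β]
  unfold Ek
  have d1 := k_diff1 (r := a - β) hε (hfg.lo a a) (hfg.lo a β)
  have d2 := k_le (r := a - β) hε (hfg.lo a β) (hfg.hi a β)
  have d20 := k_nonneg (r := a - β) hε (hfg.lo a β)
  have c1 := scut_bd hψ (√ε / 2 ^ 6) (a - β)
  have hc : |scut ψ (√ε / 2 ^ 6) (a - β) - scut ψ √ε (a - β)| ≤ 1 := by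
    obtain ⟨h1, h2⟩ := hψ.2.2.1 ((a - β) / (√ε / 2 ^ 6))
    obtain ⟨h3, h4⟩ := hψ.2.2.1 ((a - β) / (√ε))
    unfold scut
    rw [abs_le]
    constructor <;> linarith
  have d2' : (2 * ε + f a + g β) / ((a - β) ^ 2 + (2 * ε + f a + g β) ^ 2) *
      |scut ψ (√ε / 2 ^ 6) (a - β) - scut ψ √ε (a - β)| ≤ 163840 * A := by
    by_cases hr : |a - β| ≤ √ε / 128
    · rw [scut_one hψ (by positivity) (by norm_num; linarith), scut_one hψ hs (by linarith)]
      simp; linarith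
    · have : (√ε / 128) ^ 2 ≤ |a - β| ^ 2 := by gcongr; linarith
      rw [sq_abs, div_pow, pow_two (√ε), hss] at this
      have h3 : ε / (ε ^ 2 + (a - β) ^ 2) ≤ 16384 := by
        rw [div_le_iff₀ (by positivity)]
        nlinarith [sq_nonneg ε]
      calc _ ≤ (10 * A * 16384) * 1 := by
            gcongr
            exact d2.trans (by gcongr)
        _ = _ := by ring
  have d1' : |(2 * ε + f a + g a) - (2 * ε + f a + g β)| / ((a - β) ^ 2 + ε ^ 2) ≤ 6 * A * ρ * (1 / (|a - β| + ε)) := by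
    have h1 : |(2 * ε + f a + g a) - (2 * ε + f a + g β)| ≤ A * (3 * ρ) * |a - β| := by
      rw [show (2 * ε + f a + g a) - (2 * ε + f a + g β) = g a - g β by ring]
      refine (hfg.lg a β).trans ?_
      gcongr
    rw [mul_one_div, div_le_div_iff₀ (by positivity) (by positivity), ← sq_abs (a - β)]
    have h0 := abs_nonneg (a - β)
    generalize |a - β| = u at *
    calc _ ≤ A * (3 * ρ) * u * (u + ε) := by gcongr
      _ = A * (3 * ρ) * (u * (u + ε)) := by ring
      _ ≤ A * (3 * ρ) * (2 * (u ^ 2 + ε ^ 2)) := by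
          apply mul_le_mul_of_nonneg_left _ (by positivity)
          nlinarith [sq_nonneg (u - ε), sq_nonneg u]
      _ = _ := by ring
  generalize (2 * ε + f a + g β) / ((a - β) ^ 2 + (2 * ε + f a + g β) ^ 2) = k2 at *
  generalize (2 * ε + f a + g a) / ((a - β) ^ 2 + (2 * ε + f a + g a) ^ 2) = k1 at *
  generalize scut ψ (√ε / 2 ^ 6) (a - β) = c at *
  generalize scut ψ (√ε) (a - β) = p at *
  rw [show k1 * c - k2 * p = (k1 - k2) * c + k2 * (c - p) by ring]
  refine (abs_add_le _ _).trans ?_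
  rw [abs_mul, abs_mul, abs_of_nonneg d20]
  have : |k1 - k2| * |c| ≤ |k1 - k2| * 1 := by gcongr
  linarith

lemma prod_diff {k k0 c c0 u v w : ℝ} (hk : |k - k0| ≤ u) (hc : |c| ≤ 1) (hk0 : |k0| ≤ v)
    (hcc : |c - c0| ≤ w) : |k * c - k0 * c0| ≤ u + v * w := by
  rw [show k * c - k0 * c0 = (k - k0) * c + k0 * (c - c0) by ring]
  refine (abs_add_le _ _).trans ?_
  rw [abs_mul, abs_mul]
  have hu : 0 ≤ u := (abs_nonneg _).trans hk
  have hv : 0 ≤ v := (abs_nonneg _).trans hk0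
  calc _ ≤ u * 1 + v * w := by gcongr
    _ = _ := by ring

lemma Ek_far {A K : ℝ} (hA : 1 ≤ A) {ψ : ℝ → ℝ} (hψ : IsCutoff ψ)
    (hK0 : 0 < K) (hK : ∀ x y, |ψ x - ψ y| ≤ K * |x - y|) :
    ∃ C : ℝ, 0 < C ∧ ∀ ε : ℝ, 0 < ε → ε ≤ 1 → ∀ f g : ℝ → ℝ, NiceFG A ε f g →
      ∀ α β : ℝ, 2 * |α| ≤ |β| → β ≠ 0 → |β| ≤ 2 * √ε →
      |Ek ψ ε f g α β - Ek ψ ε f g 0 β| ≤ C * (|α| / |β|) := by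
  set C1 := 8 * A + 160000 * (10 * A) * (3 + 4 * A * (10 * A)) with hC1
  refine ⟨(4 * A + 16 * A * (1 + 2 * A)) + 2 * (C1 + 400000 * A * (128 * K)), by positivity, ?_⟩
  intro ε hε hε1 f g hfg α β hαβ hβ0 hβs
  have hs : 0 < √ε := Real.sqrt_pos.2 hε
  have hss : √ε * √ε = ε := Real.mul_self_sqrt hε.le
  have hs1 : √ε ≤ 1 := by nlinarith
  have ht : 0 < |β| := abs_pos.2 hβ0
  have ha := abs_nonneg α
  have hrl : |β| / 2 ≤ |α - β| := by
    have := abs_sub_abs_le_abs_sub β α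
    rw [abs_sub_comm] at this
    linarith
  have hru : |α - β| ≤ 3 * |β| / 2 := by
    have := abs_sub α β
    linarith
  have hr0 : |0 - β| = |β| := by simp
  have hrr : |(α - β) - (0 - β)| ≤ |α| := by
    rw [show (α - β) - (0 - β) = α by ring]
  have sq1 : |α| * |α| ≤ |α| * |β| := by nlinarith
  have hfα : |f α| ≤ A * |α| * |β| := by
    have := hfg.lf α 0
    simp only [hfg.f0, sub_zero, abs_zero, add_zero] at this
    nlinarith
  have hgα : |g α| ≤ A * |α| * |β| := by
    have := hfg.lg α 0
    simp only [hfg.g0, sub_zero, abs_zero, add_zero] at this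
    nlinarith
  have hgβ : |g β| ≤ A * (|β| * |β|) := by
    have := hfg.lg β 0
    simp only [hfg.g0, sub_zero, abs_zero, add_zero] at this
    nlinarith
  have hXX : |(2 * ε + f α + g α) - (2 * ε + f 0 + g 0)| ≤ 2 * A * |α| * |β| := by
    rw [hfg.f0, hfg.g0, show (2 * ε + f α + g α) - (2 * ε + 0 + 0) = f α + g α by ring]
    refine (abs_add_le _ _).trans ?_
    linarith
  have hYY : |(2 * ε + f α + g β) - (2 * ε + f 0 + g β)| ≤ 2 * A * |α| * |β| := by
    rw [hfg.f0, show (2 * ε + f α + g β) - (2 * ε + 0 + g β) = f α by ring]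
    nlinarith [abs_nonneg (f α)]
  have hC1p : 0 < C1 := by positivity
  have hab : 0 ≤ |α| / |β| := by positivity
  by_cases hcase : |β| < √ε / 192
  · -- all cutoffs are one
    unfold Ek
    rw [scut_one hψ (r := √ε / 2 ^ 6) (x := α - β) (by positivity) (by norm_num; linarith),
      scut_one hψ (r := √ε) (x := α - β) hs (by linarith),
      scut_one hψ (r := √ε / 2 ^ 6) (x := 0 - β) (by positivity) (by rw [hr0]; norm_num; linarith),
      scut_one hψ (r := √ε) (x := 0 - β) hs (by rw [hr0]; linarith)]
    simp only [mul_one]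
    have hb1 : |β| ≤ 1 := by linarith
    have hd : 2 * A * |α| * |β| ≤ 2 * A * |α| := mul_le_of_le_one_right (by positivity) hb1
    have := k_double (ρ := |β| / 2) (r := α - β) (r0 := 0 - β)
      (X := 2 * ε + f α + g α) (X0 := 2 * ε + f 0 + g 0) (Y := 2 * ε + f α + g β)
      (Y0 := 2 * ε + f 0 + g β) (d := (1 + 2 * A) * |α|) (e := A * |α| * |β|) (m := A * (|β| * |β|))
      (by positivity) hrl (by rw [hr0]; linarith) (by linarith) (by linarith)
      (by
        rw [hfg.f0, hfg.g0, show (2 * ε + f α + g α - (2 * ε + f α + g β)) - (2 * ε + 0 + 0 - (2 * ε + 0 + g β)) = g α by ring]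
        exact hgα)
      (by
        rw [hfg.f0, hfg.g0, show (2 * ε + 0 + 0 - (2 * ε + 0 + g β)) = -g β by ring, abs_neg]
        exact hgβ)
    refine this.trans ?_
    have e : A * |α| * |β| * ((|β| / 2)⁻¹ * (|β| / 2)⁻¹) + A * (|β| * |β|) *
        (2 * ((1 + 2 * A) * |α|) * ((|β| / 2)⁻¹ * (|β| / 2)⁻¹ * (|β| / 2)⁻¹))
        = (4 * A + 16 * A * (1 + 2 * A)) * (|α| / |β|) := by
      field_simp
      ring
    rw [e]
    apply mul_le_mul_of_nonneg_right _ hab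
    have : 0 ≤ 2 * (C1 + 400000 * A * (128 * K)) := by positivity
    linarith
  · push Not at hcase
    have hεt : ε ≤ 40000 * |β| ^ 2 := by
      have : (√ε / 192) ^ 2 ≤ |β| ^ 2 := by gcongr
      rw [div_pow, pow_two (√ε), hss] at this
      nlinarith
    have kb : ∀ Y : ℝ, ε ≤ Y → Y ≤ 10 * A * ε → |Y / ((0 - β) ^ 2 + Y ^ 2)| ≤ 400000 * A := by
      intro Y h1 h2
      rw [abs_of_nonneg (k_nonneg hε h1)]
      refine (k_le hε h1 h2).trans ?_
      have : ε / (ε ^ 2 + (0 - β) ^ 2) ≤ 40000 := by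
        rw [div_le_iff₀ (by positivity), ← sq_abs (0 - β), hr0]
        nlinarith [sq_nonneg ε]
      nlinarith
    have l1 : |scut ψ (√ε / 2 ^ 6) (α - β) - scut ψ (√ε / 2 ^ 6) (0 - β)| ≤ 128 * K * (|α| / |β|) := by
      refine (scut_lip (by positivity) hK _ _).trans ?_
      calc _ ≤ K * |α| / ((|β| / 2) / 2 ^ 6) := by gcongr; linarith
        _ = _ := by field_simp; norm_num
    have l2 : |scut ψ (√ε) (α - β) - scut ψ (√ε) (0 - β)| ≤ 128 * K * (|α| / |β|) := by
      refine (scut_lip (by positivity) hK _ _).trans ?_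
      calc _ ≤ K * |α| / (|β| / 2) := by gcongr; linarith
        _ = 2 * K * (|α| / |β|) := by field_simp
        _ ≤ _ := by gcongr; norm_num
    have m1 := k_diff2 hA (by linarith : 1 ≤ 10 * A) hε hε1 ht ha hrl hru hr0 hrr
      (hfg.lo α α) (hfg.hi α α) (hfg.lo 0 0) (hfg.hi 0 0) hXX hεt
    have m2 := k_diff2 hA (by linarith : 1 ≤ 10 * A) hε hε1 ht ha hrl hru hr0 hrr
      (hfg.lo α β) (hfg.hi α β) (hfg.lo 0 β) (hfg.hi 0 β) hYY hεt
    have n1 := prod_diff m1 (scut_bd hψ (√ε / 2 ^ 6) (α - β)) (kb _ (hfg.lo 0 0) (hfg.hi 0 0)) l1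
    have n2 := prod_diff m2 (scut_bd hψ (√ε) (α - β)) (kb _ (hfg.lo 0 β) (hfg.hi 0 β)) l2
    unfold Ek
    rw [sub_sub_sub_comm]
    refine (abs_sub _ _).trans ?_
    have hpos : 0 ≤ (4 * A + 16 * A * (1 + 2 * A)) * (|α| / |β|) := by positivity
    rw [← hC1] at n1 n2
    refine (add_le_add n1 n2).trans ?_
    have e : ((4 * A + 16 * A * (1 + 2 * A)) + 2 * (C1 + 400000 * A * (128 * K))) * (|α| / |β|)
      = (4 * A + 16 * A * (1 + 2 * A)) * (|α| / |β|) + ((C1 * (|α| / |β|) +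
        400000 * A * (128 * K * (|α| / |β|))) + (C1 * (|α| / |β|) +
        400000 * A * (128 * K * (|α| / |β|)))) := by ring
    rw [e]
    exact le_add_of_nonneg_left hpos

lemma Ek_diff {A : ℝ} (hA : 1 ≤ A) {ψ : ℝ → ℝ} (hψ : IsCutoff ψ) :
    ∃ C : ℝ, 0 < C ∧ ∀ ε : ℝ, 0 < ε → ε ≤ 1 / 1000000 → ∀ f g : ℝ → ℝ, NiceFG A ε f g →
      ∀ α β : ℝ, |α| ≤ √ε / 128 →
      |Ek ψ ε f g α β - Ek ψ ε f g 0 β| ≤ C * (|α| + ε) * (kk ε β + kk ε (β - α)) := by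
  obtain ⟨K, hK0, hK⟩ := cutoff_lip hψ
  obtain ⟨C, hC0, hC⟩ := Ek_far hA hψ hK0 hK
  refine ⟨2 * C + 2000000 * A, by positivity, ?_⟩
  intro ε hε hε1 f g hfg α β hα
  have hs : 0 < √ε := Real.sqrt_pos.2 hε
  have hss : √ε * √ε = ε := Real.mul_self_sqrt hε.le
  have hs1 : √ε ≤ 1 / 1000 := by
    apply Real.sqrt_le_iff.2; constructor
    · norm_num
    · linarith
  have ha := abs_nonneg α
  have hb := abs_nonneg β
  have hk : ∀ x, 0 ≤ kk ε x := fun x => by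
    unfold kk; apply indicator_nonneg; intro _ _; positivity
  by_cases h2s : 2 * √ε < |β|
  · have hr : √ε < |α - β| := by
      have := abs_sub_abs_le_abs_sub β α
      rw [abs_sub_comm] at this
      linarith
    have hr0 : √ε < |0 - β| := by rw [zero_sub, abs_neg]; linarith
    have h64 : √ε / 2 ^ 6 < √ε := by norm_num; linarith
    unfold Ek
    rw [scut_zero hψ hs hr, scut_zero hψ hs hr0, scut_zero hψ (by positivity) (h64.trans hr),
      scut_zero hψ (by positivity) (h64.trans hr0)]
    have := hk β
    have := hk (β - α)
    simp only [mul_zero, sub_zero, abs_zero]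
    positivity
  · push Not at h2s
    have kb : kk ε β = 1 / (|β| + ε) := by
      unfold kk
      rw [indicator_of_mem]
      exact abs_le.1 (by linarith)
    have kb2 : kk ε (β - α) = 1 / (|α - β| + ε) := by
      unfold kk
      rw [indicator_of_mem, abs_sub_comm]
      have := abs_sub β α
      exact abs_le.1 (by linarith)
    have p1 : 0 < 1 / (|β| + ε) := by positivity
    have p2 : 0 < 1 / (|α - β| + ε) := by positivity
    rw [kb, kb2]
    by_cases hnear : |β| ≤ 2 * (|α| + ε)
    · have n1 := Ek_near (ρ := |α| + ε) (a := α) (β := β) hA hψ hε hfg (by linarith)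
      have n2 := Ek_near (ρ := |α| + ε) (a := 0) (β := β) hA hψ hε hfg (by rw [abs_zero]; linarith)
      rw [zero_sub, abs_neg] at n2
      have one : 1 ≤ 3 * (|α| + ε) * (1 / (|β| + ε)) := by
        rw [mul_one_div, le_div_iff₀ (by positivity)]; linarith
      refine (abs_sub _ _).trans ?_
      have q1 : 0 ≤ (|α| + ε) * (1 / (|β| + ε)) := by positivity
      have q2 : 0 ≤ (|α| + ε) * (1 / (|α - β| + ε)) := by positivity
      have q3 : 163840 * A ≤ 163840 * A * (3 * (|α| + ε) * (1 / (|β| + ε))) :=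
        le_mul_of_one_le_right (by positivity) one
      have q4 : 0 ≤ A * ((|α| + ε) * (1 / (|β| + ε))) := by positivity
      have q5 : 0 ≤ A * ((|α| + ε) * (1 / (|α - β| + ε))) := by positivity
      have q6 : 0 ≤ C * ((|α| + ε) * (1 / (|β| + ε))) := by positivity
      have q7 : 0 ≤ C * ((|α| + ε) * (1 / (|α - β| + ε))) := by positivity
      generalize 1 / (|β| + ε) = u at *
      generalize 1 / (|α - β| + ε) = v at *
      linarith
    · push Not at hnear
      have hβ0 : 0 < |β| := by linarith
      have := hC ε hε (by linarith) f g hfg α β (by linarith) (abs_pos.1 hβ0) h2s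
      refine this.trans ?_
      have h1 : |α| / |β| ≤ 2 * (|α| + ε) * (1 / (|β| + ε)) := by
        rw [mul_one_div, div_le_div_iff₀ hβ0 (by positivity)]
        nlinarith
      calc C * (|α| / |β|) ≤ C * (2 * (|α| + ε) * (1 / (|β| + ε))) := by gcongr
        _ = (2 * C + 0) * (|α| + ε) * (1 / (|β| + ε) + 0) := by ring
        _ ≤ _ := by
          gcongr
          positivity

lemma kk_int {ε : ℝ} (hε : 0 < ε) (hε1 : ε ≤ 1 / 2) :
    Integrable (kk ε) ∧ ∫ x, kk ε x ≤ 2 * Real.log (1 / ε) := by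
  have hc : Continuous (fun x : ℝ => 1 / (|x| + ε)) := by
    apply Continuous.div continuous_const (by fun_prop)
    intro x; positivity
  have hkk : kk ε = (Icc (-(1/2) : ℝ) (1/2)).indicator (fun x => 1 / (|x| + ε)) := rfl
  constructor
  · rw [hkk, integrable_indicator_iff measurableSet_Icc]
    exact hc.continuousOn.integrableOn_compact isCompact_Icc
  · rw [hkk, integral_indicator measurableSet_Icc, integral_Icc_eq_integral_Ioc,
      ← intervalIntegral.integral_of_le (by norm_num),
      ← intervalIntegral.integral_add_adjacent_intervals (b := 0) (hc.intervalIntegrable _ _)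
        (hc.intervalIntegrable _ _)]
    have h1 : ∫ x in (-(1/2) : ℝ)..0, 1 / (|x| + ε) = ∫ x in (0:ℝ)..(1/2), 1 / (|x| + ε) := by
      have := intervalIntegral.integral_comp_neg (a := (0:ℝ)) (b := 1/2) (fun x : ℝ => 1 / (|x| + ε))
      simp only [abs_neg, neg_zero] at this
      exact this.symm
    have h2 : ∫ x in (0:ℝ)..(1/2), 1 / (|x| + ε) = ∫ x in (0:ℝ)..(1/2), 1 / (x + ε) := by
      apply intervalIntegral.integral_congr
      intro x hx
      rw [uIcc_of_le (by norm_num)] at hx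
      simp only [abs_of_nonneg hx.1]
    have h3 : ∫ x in (0:ℝ)..(1/2), 1 / (x + ε) ≤ Real.log (1 / ε) := by
      rw [intervalIntegral.integral_comp_add_right (fun x => 1 / x),
        integral_one_div_of_pos (by linarith) (by linarith)]
      apply Real.log_le_log (by positivity)
      rw [zero_add]
      gcongr
      linarith
    rw [h1, h2]
    linarith

lemma kint {B ε M α : ℝ} {Y c h : ℝ → ℝ} (hε : 0 < ε) (hY : Continuous Y) (h1 : ∀ b, ε ≤ Y b)
    (h2 : ∀ b, Y b ≤ B * ε) (hc : Continuous c) (hc1 : ∀ b, |c b| ≤ 1)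
    (hh : Measurable h) (hM : ∀ b, |h b| ≤ M) :
    Integrable (fun β => Y β / ((α - β) ^ 2 + Y β ^ 2) * h β * c β) ∧
    |∫ β, Y β / ((α - β) ^ 2 + Y β ^ 2) * h β * c β| ≤ B * M * π := by
  have hM0 : 0 ≤ M := (abs_nonneg _).trans (hM 0)
  obtain ⟨ci, ce⟩ := cauchy_int hε
  have ci' : Integrable (fun β : ℝ => B * M * (ε / (ε ^ 2 + (α - β) ^ 2))) :=
    (ci.comp_sub_left α).const_mul _
  have ce' : ∫ β : ℝ, B * M * (ε / (ε ^ 2 + (α - β) ^ 2)) = B * M * π := by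
    rw [integral_const_mul, integral_sub_left_eq_self (fun x => ε / (ε ^ 2 + x ^ 2)), ce]
  have hb : ∀ β, ‖Y β / ((α - β) ^ 2 + Y β ^ 2) * h β * c β‖ ≤
      B * M * (ε / (ε ^ 2 + (α - β) ^ 2)) := by
    intro β
    have k1 := k_le (r := α - β) hε (h1 β) (h2 β)
    have k0 := k_nonneg (r := α - β) hε (h1 β)
    rw [Real.norm_eq_abs, abs_mul, abs_mul, abs_of_nonneg k0]
    calc _ ≤ (B * (ε / (ε ^ 2 + (α - β) ^ 2))) * M * 1 :=
          mul_le_mul (mul_le_mul k1 (hM β) (abs_nonneg _) (k0.trans k1)) (hc1 β) (abs_nonneg _)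
            (mul_nonneg (k0.trans k1) hM0)
      _ = _ := by ring
  constructor
  · refine ci'.mono' ?_ (Eventually.of_forall hb)
    apply Measurable.aestronglyMeasurable
    have := hY.measurable
    have := hc.measurable
    fun_prop
  · rw [← ce', ← Real.norm_eq_abs]
    exact norm_integral_le_of_norm_le ci' (Eventually.of_forall hb)

lemma scut_cont {ψ : ℝ → ℝ} (hψ : IsCutoff ψ) (r : ℝ) : Continuous (scut ψ r) := by
  have := hψ.1.continuous
  unfold scut
  fun_prop

lemma N_facts {A : ℝ} (hA : 1 ≤ A) {ψ : ℝ → ℝ} (hψ : IsCutoff ψ) :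
    ∃ C : ℝ, 0 < C ∧ ∀ ε : ℝ, 0 < ε → ε ≤ 1 / 1000000 → ∀ f g : ℝ → ℝ, NiceFG A ε f g →
      ∀ (h : ℝ → ℝ) (M : ℝ), Measurable h → (∀ x, |h x| ≤ M) →
      (∀ α, |Mop ψ ε f g h α - T3 ψ ε f g h α| ≤ 10 * A * M) ∧
      (∀ α, |α| ≤ √ε / 128 → |(Mop ψ ε f g h α - T3 ψ ε f g h α) -
        (Mop ψ ε f g h 0 - T3 ψ ε f g h 0)| ≤ C * M * ((|α| + ε) * Real.log (1 / ε))) := by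
  obtain ⟨C, hC0, hC⟩ := Ek_diff hA hψ
  refine ⟨C, hC0, ?_⟩
  intro ε hε hε1 f g hfg h M hh hM
  have hs : 0 < √ε := Real.sqrt_pos.2 hε
  have hM0 : 0 ≤ M := (abs_nonneg _).trans (hM 0)
  have hpi := Real.pi_pos
  have mI : ∀ α, Integrable (fun β => (2 * ε + f α + g α) / ((α - β) ^ 2 + (2 * ε + f α + g α) ^ 2) *
      h β * (scut ψ (√ε / 2 ^ 6) α * scut ψ (√ε / 2 ^ 6) (α - β))) ∧
      |∫ β, (2 * ε + f α + g α) / ((α - β) ^ 2 + (2 * ε + f α + g α) ^ 2) *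
      h β * (scut ψ (√ε / 2 ^ 6) α * scut ψ (√ε / 2 ^ 6) (α - β))| ≤ 10 * A * M * π := by
    intro α
    refine kint (Y := fun _ => 2 * ε + f α + g α) hε continuous_const (fun _ => hfg.lo α α)
      (fun _ => hfg.hi α α) ?_ ?_ hh hM
    · have := scut_cont hψ (√ε / 2 ^ 6)
      fun_prop
    · intro b
      rw [abs_mul]
      exact mul_le_one₀ (scut_bd hψ _ _) (abs_nonneg _) (scut_bd hψ _ _)
  have tI : ∀ α, Integrable (fun β => (2 * ε + f α + g β) / ((α - β) ^ 2 + (2 * ε + f α + g β) ^ 2) *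
      h β * scut ψ (√ε) (α - β)) ∧
      |∫ β, (2 * ε + f α + g β) / ((α - β) ^ 2 + (2 * ε + f α + g β) ^ 2) *
      h β * scut ψ (√ε) (α - β)| ≤ 10 * A * M * π := by
    intro α
    refine kint (Y := fun β => 2 * ε + f α + g β) hε ?_ (fun _ => hfg.lo α _)
      (fun _ => hfg.hi α _) ?_ (fun _ => scut_bd hψ _ _) hh hM
    · have := hfg.cg
      fun_prop
    · have := scut_cont hψ (√ε)
      fun_prop
  have mE : ∀ α, Mop ψ ε f g h α = (2 * π)⁻¹ * ∫ β, (2 * ε + f α + g α) / ((α - β) ^ 2 + (2 * ε + f α + g α) ^ 2) *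
      h β * (scut ψ (√ε / 2 ^ 6) α * scut ψ (√ε / 2 ^ 6) (α - β)) := by
    intro α
    unfold Mop Mker Xt
    congr 2
    ext β
    ring
  constructor
  · intro α
    rw [mE α]
    unfold T3
    rw [← mul_sub, abs_mul, abs_of_pos (by positivity)]
    have h1 := (mI α).2
    have h2 := (tI α).2
    have h3 := abs_sub (∫ β, (2 * ε + f α + g α) / ((α - β) ^ 2 + (2 * ε + f α + g α) ^ 2) *
      h β * (scut ψ (√ε / 2 ^ 6) α * scut ψ (√ε / 2 ^ 6) (α - β)))
      (∫ β, (2 * ε + f α + g β) / ((α - β) ^ 2 + (2 * ε + f α + g β) ^ 2) *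
      h β * scut ψ (√ε) (α - β))
    calc _ ≤ (2 * π)⁻¹ * (2 * (10 * A * M * π)) := by
          apply mul_le_mul_of_nonneg_left _ (by positivity)
          linarith
      _ = _ := by field_simp
  · have nE : ∀ α, |α| ≤ √ε / 128 → Integrable (fun β => Ek ψ ε f g α β * h β) ∧
        Mop ψ ε f g h α - T3 ψ ε f g h α = (2 * π)⁻¹ * ∫ β, Ek ψ ε f g α β * h β := by
      intro α hα
      have e : (fun β => Ek ψ ε f g α β * h β) = fun β =>
          (2 * ε + f α + g α) / ((α - β) ^ 2 + (2 * ε + f α + g α) ^ 2) *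
          h β * (scut ψ (√ε / 2 ^ 6) α * scut ψ (√ε / 2 ^ 6) (α - β)) -
          (2 * ε + f α + g β) / ((α - β) ^ 2 + (2 * ε + f α + g β) ^ 2) *
          h β * scut ψ (√ε) (α - β) := by
        ext β
        rw [scut_one hψ (r := √ε / 2 ^ 6) (x := α) (by positivity) (by norm_num; linarith)]
        unfold Ek
        ring
      rw [e]
      refine ⟨(mI α).1.sub (tI α).1, ?_⟩
      rw [integral_sub (mI α).1 (tI α).1, mE α, mul_sub]
      rfl
    intro α hα
    obtain ⟨i1, e1⟩ := nE α hα
    obtain ⟨i0, e0⟩ := nE 0 (by rw [abs_zero]; positivity)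
    obtain ⟨ki, ke⟩ := kk_int hε (by linarith)
    rw [e1, e0, ← mul_sub, ← integral_sub i1 i0, abs_mul, abs_of_pos (by positivity)]
    have ki2 : Integrable (fun β => kk ε (β - α)) := ki.comp_sub_right α
    have ke2 : ∫ β, kk ε (β - α) = ∫ β, kk ε β := integral_sub_right_eq_self (kk ε) α
    have kt : Integrable (fun β => C * (|α| + ε) * M * (kk ε β + kk ε (β - α))) :=
      (ki.add ki2).const_mul _
    have kte : ∫ β, C * (|α| + ε) * M * (kk ε β + kk ε (β - α)) ≤
        C * (|α| + ε) * M * (4 * Real.log (1 / ε)) := by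
      rw [integral_const_mul, integral_add ki ki2, ke2]
      apply mul_le_mul_of_nonneg_left _ (by positivity)
      linarith
    have hb : ∀ β, ‖Ek ψ ε f g α β * h β - Ek ψ ε f g 0 β * h β‖ ≤
        C * (|α| + ε) * M * (kk ε β + kk ε (β - α)) := by
      intro β
      rw [← sub_mul, Real.norm_eq_abs, abs_mul]
      have := hC ε hε hε1 f g hfg α β hα
      calc _ ≤ C * (|α| + ε) * (kk ε β + kk ε (β - α)) * M :=
            mul_le_mul this (hM β) (abs_nonneg _) ((abs_nonneg _).trans this)
        _ = _ := by ring
    have := (norm_integral_le_of_norm_le kt (Eventually.of_forall hb)).trans kte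
    rw [Real.norm_eq_abs] at this
    have hL : 0 ≤ Real.log (1 / ε) := Real.log_nonneg (by rw [le_div_iff₀ hε]; linarith)
    have h4 : (2 * π)⁻¹ * 4 ≤ 1 := by
      rw [inv_mul_le_iff₀ (by positivity)]
      linarith [Real.pi_gt_three]
    calc _ ≤ (2 * π)⁻¹ * (C * (|α| + ε) * M * (4 * Real.log (1 / ε))) := by gcongr
      _ = ((2 * π)⁻¹ * 4) * (C * M * ((|α| + ε) * Real.log (1 / ε))) := by ring
      _ ≤ 1 * (C * M * ((|α| + ε) * Real.log (1 / ε))) := by gcongr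
      _ = _ := one_mul _

lemma pair_bd {ε M C1 C2 D L : ℝ} {N Hs : ℝ → ℝ} (hε : 0 < ε)
    (hM : 0 ≤ M) (hC1 : 0 ≤ C1) (hC2 : 0 ≤ C2) (hD : 0 ≤ D) (hL : 1 ≤ L)
    (hN : ∀ a, |a| ≤ √ε → |N a| ≤ C2 * M)
    (hN1 : ∀ a, |a| ≤ √ε / 128 → |N a - N 0| ≤ C1 * M * ((|a| + ε) * L))
    (hi : Integrable Hs) (h0 : ∫ a, Hs a = 0)
    (hb : ∀ b, |Hs b| ≤ D * (ε ^ 2 / (ε ^ 3 + |b| ^ 3)))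
    (hz : ∀ b, √ε < |b| * 32 → Hs b = 0) :
    |∫ a, N a * Hs a| ≤ (2 * π * C1 * D + 4 * 128 ^ 3 * C2 * D) * ε * L * M := by
  have hs : 0 < √ε := Real.sqrt_pos.2 hε
  have hss : √ε * √ε = ε := Real.mul_self_sqrt hε.le
  have hpi := Real.pi_pos
  by_cases hint : Integrable (fun a => N a * Hs a)
  swap
  · rw [integral_undef hint, abs_zero]; positivity
  have e : ∫ a, N a * Hs a = ∫ a, (N a - N 0) * Hs a := by
    have : (fun a => (N a - N 0) * Hs a) = fun a => N a * Hs a - N 0 * Hs a := by ext; ring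
    rw [this, integral_sub hint (hi.const_mul _), integral_const_mul, h0]; ring
  obtain ⟨ci, ce⟩ := cauchy_int hε
  set E1 : ℝ := 2 * C1 * D * M * L * ε
  set E2 : ℝ := 2 * C2 * M * D * 128 ^ 3 * √ε
  have hE1 : 0 ≤ E1 := by positivity
  have hE2 : 0 ≤ E2 := by positivity
  have i1 : Integrable (fun x : ℝ => E1 * (ε / (ε ^ 2 + x ^ 2))) := ci.const_mul _
  have i2 : Integrable ((Icc (-√ε) √ε).indicator (fun _ : ℝ => E2)) := by
    rw [integrable_indicator_iff measurableSet_Icc]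
    exact integrableOn_const (by simp)
  have tot : ∫ x : ℝ, (E1 * (ε / (ε ^ 2 + x ^ 2)) + (Icc (-√ε) √ε).indicator (fun _ : ℝ => E2) x)
      = E1 * π + 2 * √ε * E2 := by
    rw [integral_add i1 i2, integral_const_mul, ce, integral_indicator measurableSet_Icc,
      setIntegral_const]
    simp only [measureReal_def, Real.volume_Icc, smul_eq_mul]
    rw [ENNReal.toReal_ofReal (by linarith)]
    ring
  have dom : ∀ a, ‖(N a - N 0) * Hs a‖ ≤
      E1 * (ε / (ε ^ 2 + a ^ 2)) + (Icc (-√ε) √ε).indicator (fun _ : ℝ => E2) a := by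
    intro a
    have p1 : 0 ≤ E1 * (ε / (ε ^ 2 + a ^ 2)) := by positivity
    have p2 : 0 ≤ (Icc (-√ε) √ε).indicator (fun _ : ℝ => E2) a :=
      indicator_nonneg (fun _ _ => hE2) a
    have ha := abs_nonneg a
    rw [Real.norm_eq_abs, abs_mul]
    by_cases c1 : |a| ≤ √ε / 128
    · have q : (|a| + ε) * (ε ^ 2 / (ε ^ 3 + |a| ^ 3)) ≤ 2 * ε * (ε / (ε ^ 2 + a ^ 2)) := by
        rw [← sq_abs a, ← mul_div_assoc, ← mul_div_assoc,
          div_le_div_iff₀ (by positivity) (by positivity)]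
        generalize |a| = t at *
        have : (t + ε) * (ε ^ 2 + t ^ 2) ≤ 2 * (ε ^ 3 + t ^ 3) := by
          nlinarith [mul_nonneg (add_nonneg ha hε.le) (sq_nonneg (t - ε))]
        calc _ = ε ^ 2 * ((t + ε) * (ε ^ 2 + t ^ 2)) := by ring
          _ ≤ ε ^ 2 * (2 * (ε ^ 3 + t ^ 3)) := by gcongr
          _ = _ := by ring
      calc _ ≤ (C1 * M * ((|a| + ε) * L)) * (D * (ε ^ 2 / (ε ^ 3 + |a| ^ 3))) :=
            mul_le_mul (hN1 a c1) (hb a) (abs_nonneg _) (by positivity)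
        _ = C1 * M * L * D * ((|a| + ε) * (ε ^ 2 / (ε ^ 3 + |a| ^ 3))) := by ring
        _ ≤ C1 * M * L * D * (2 * ε * (ε / (ε ^ 2 + a ^ 2))) :=
            mul_le_mul_of_nonneg_left q (by positivity)
        _ = E1 * (ε / (ε ^ 2 + a ^ 2)) := by simp only [E1]; ring
        _ ≤ _ := le_add_of_nonneg_right p2
    · push Not at c1
      by_cases c2 : √ε < |a| * 32
      · rw [hz a c2, abs_zero, mul_zero]; positivity
      · push Not at c2
        have has : |a| ≤ √ε := by linarith
        rw [indicator_of_mem (show a ∈ Icc (-√ε) √ε from abs_le.1 has)]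
        have n1 : |N a - N 0| ≤ 2 * C2 * M := by
          refine (abs_sub _ _).trans ?_
          have := hN a has
          have := hN 0 (by rw [abs_zero]; exact hs.le)
          linarith
        have n2 : ε ^ 2 / (ε ^ 3 + |a| ^ 3) ≤ 128 ^ 3 * √ε := by
          rw [div_le_iff₀ (by positivity)]
          have : (√ε / 128) ^ 3 ≤ |a| ^ 3 := by gcongr
          calc ε ^ 2 = 128 ^ 3 * √ε * (√ε / 128) ^ 3 := by
                nth_rewrite 1 [← hss]; ring
            _ ≤ 128 ^ 3 * √ε * (ε ^ 3 + |a| ^ 3) := by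
                apply mul_le_mul_of_nonneg_left _ (by positivity)
                have : 0 < ε ^ 3 := by positivity
                linarith
        calc _ ≤ (2 * C2 * M) * (D * (128 ^ 3 * √ε)) := by
              apply mul_le_mul n1 ((hb a).trans _) (abs_nonneg _) (by positivity)
              exact mul_le_mul_of_nonneg_left n2 hD
          _ = E2 := by simp only [E2]; ring
          _ ≤ _ := le_add_of_nonneg_left p1
  have := norm_integral_le_of_norm_le (i1.add i2) (Eventually.of_forall dom)
  rw [e, ← Real.norm_eq_abs]
  refine this.trans ?_
  simp only [Pi.add_apply]
  rw [tot]
  have k : 2 * √ε * E2 = 4 * 128 ^ 3 * C2 * D * ε * 1 * M := by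
    simp only [E2]
    calc _ = 4 * 128 ^ 3 * C2 * D * (√ε * √ε) * M := by ring
      _ = _ := by rw [hss]; ring
  have k2 : 4 * 128 ^ 3 * C2 * D * ε * 1 * M ≤ 4 * 128 ^ 3 * C2 * D * ε * L * M := by gcongr
  have k3 : E1 * π = 2 * π * C1 * D * ε * L * M := by simp only [E1]; ring
  rw [k, k3]
  linarith

lemma niceP_of {δ ε : ℝ} (hε : 0 < ε) {φ : ℝ → ℝ} (h : InC2 δ ε φ) : NiceP ε φ := by
  obtain ⟨h1, _, h3, h4⟩ := h
  refine ⟨h1.differentiable (by norm_num), ?_, ?_⟩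
  · intro x
    by_cases hx : x ∈ Ioo (-δ) δ
    · rw [← sq_abs x]; exact (h4 x hx).1
    · rw [image_eq_zero_of_notMem_tsupport (fun h => hx (h3 h)), abs_zero]; positivity
  · intro x
    by_cases hx : x ∈ Ioo (-δ) δ
    · exact (h4 x hx).2
    · have : x ∉ tsupport (deriv φ) := fun h => hx (h3 (tsupport_deriv_subset h))
      rw [image_eq_zero_of_notMem_tsupport this, abs_zero]; positivity

lemma Hker_clamp {ψ : ℝ → ℝ} (hψ : IsCutoff ψ) {ε : ℝ} (hε : 0 < ε) (f g : ℝ → ℝ) :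
    Hker ψ ε f g = Hker ψ ε (fun x => f (clampR (2 * √ε) x)) (fun x => g (clampR (2 * √ε) x)) := by
  have hs : 0 < √ε := Real.sqrt_pos.2 hε
  ext α β
  unfold Hker Xt
  by_cases h : √ε / 2 ^ 6 < |α|
  · rw [scut_zero hψ (by positivity) h]; simp
  · have : |α| ≤ 2 * √ε := by push Not at h; norm_num at h; linarith
    simp only [clampR_of this]

lemma Mop_clamp {ψ : ℝ → ℝ} (hψ : IsCutoff ψ) {ε : ℝ} (hε : 0 < ε) (f g h : ℝ → ℝ) {α : ℝ}
    (hα : |α| ≤ √ε / 32) :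
    Mop ψ ε f g h α = Mop ψ ε (fun x => f (clampR (2 * √ε) x)) (fun x => g (clampR (2 * √ε) x))
      ((Ioo (-(2 * √ε)) (2 * √ε)).indicator h) α := by
  have hs : 0 < √ε := Real.sqrt_pos.2 hε
  have : |α| ≤ 2 * √ε := by linarith
  unfold Mop Mker Xt
  simp only [clampR_of this]
  congr 2
  ext β
  by_cases hb : β ∈ Ioo (-(2 * √ε)) (2 * √ε)
  · rw [indicator_of_mem hb]
  · have hb' : 2 * √ε ≤ |β| := by
      by_contra hc; push Not at hc; exact hb (abs_lt.1 hc)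
    rw [scut_zero hψ (r := √ε / 2 ^ 6) (x := α - β) (by positivity)]
    · simp
    · have := abs_sub_abs_le_abs_sub β α
      rw [abs_sub_comm] at this
      norm_num; linarith

lemma T3_clamp {ψ : ℝ → ℝ} (hψ : IsCutoff ψ) {ε : ℝ} (hε : 0 < ε) (f g h : ℝ → ℝ) {α : ℝ}
    (hα : |α| ≤ √ε / 32) :
    T3 ψ ε f g h α = T3 ψ ε (fun x => f (clampR (2 * √ε) x)) (fun x => g (clampR (2 * √ε) x))
      ((Ioo (-(2 * √ε)) (2 * √ε)).indicator h) α := by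
  have hs : 0 < √ε := Real.sqrt_pos.2 hε
  have : |α| ≤ 2 * √ε := by linarith
  unfold T3
  simp only [clampR_of this]
  congr 2
  ext β
  by_cases hb : β ∈ Ioo (-(2 * √ε)) (2 * √ε)
  · rw [indicator_of_mem hb, clampR_of (abs_lt.2 hb).le]
  · have hb' : 2 * √ε ≤ |β| := by
      by_contra hc; push Not at hc; exact hb (abs_lt.1 hc)
    rw [scut_zero hψ (r := √ε) (x := α - β) (by positivity)]
    · simp
    · have := abs_sub_abs_le_abs_sub β α
      rw [abs_sub_comm] at this
      linarith

lemma Mop_symm (ψ : ℝ → ℝ) (ε : ℝ) (f g h : ℝ → ℝ) (α : ℝ) :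
    Mop ψ ε f g h α = Mop ψ ε g f h α := by
  unfold Mop Mker Xt
  rw [add_right_comm]

/-- **Z-norm comparison of `M` and `T₃` (Lemma 3.3(i), estimate (3.21)).**  For every
`h ∈ L∞(I_δ)`, `‖(M − T_{3,(f,g)})h‖_Z + ‖(M − T_{3,(g,f)})h‖_Z ≲ ε log(1/ε) ‖h‖_{L∞(I_{2√ε})}`,
i.e. for every `φ ∈ C₂` both pairings against `H*φ` are bounded by `C ε log(1/ε) M` whenever
`|h| ≤ M` on `I_{2√ε}`, with `C` depending only on `A`, `δ` (and `ψ`). -/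
theorem M_minus_T3_Znorm_bound (δ A : ℝ) (hδ : δ ∈ Ioc (0:ℝ) (1/100)) (hA : 1 ≤ A)
    (ψ : ℝ → ℝ) (hψ : IsCutoff ψ) :
    ∃ C : ℝ, 0 < C ∧
      ∀ ε : ℝ, ε ∈ Ioc (0:ℝ) (δ ^ 2 / 100) →
      ∀ f g : ℝ → ℝ, GoodFG δ A ε f g →
      ∀ h : ℝ → ℝ, Measurable h → (∃ M' : ℝ, ∀ x ∈ Ioo (-δ) δ, |h x| ≤ M') →
        ∀ M : ℝ, (∀ x ∈ Ioo (-(2 * Real.sqrt ε)) (2 * Real.sqrt ε), |h x| ≤ M) →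
          ∀ φ : ℝ → ℝ, InC2 δ ε φ →
            |∫ α : ℝ, (Mop ψ ε f g h α - T3 ψ ε f g h α) * Hstar ψ ε f g φ α| +
              |∫ α : ℝ, (Mop ψ ε f g h α - T3 ψ ε g f h α) * Hstar ψ ε f g φ α| ≤
              C * ε * Real.log (1 / ε) * M := by
  obtain ⟨D, hD0, hD⟩ := hstar_facts hA hψ
  obtain ⟨C1, hC10, hC1⟩ := N_facts hA hψ
  refine ⟨2 * (2 * π * C1 * D + 4 * 128 ^ 3 * (10 * A) * D), by positivity, ?_⟩
  intro ε hε f g hfg h hh _ M hM φ hφ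
  have he0 : 0 < ε := hε.1
  have he1 : ε ≤ 1 / 1000000 := by
    have h1 := hδ.1
    have h2 := hδ.2
    have h3 := hε.2
    nlinarith
  have hs : 0 < √ε := Real.sqrt_pos.2 he0
  have hn := nice_clamp hδ hA hε f g hfg
  have hM0 : 0 ≤ M := (abs_nonneg _).trans (hM 0 ⟨by linarith, by linarith⟩)
  have hHs : Hstar ψ ε f g φ =
      Hstar ψ ε (fun x => f (clampR (2 * √ε) x)) (fun x => g (clampR (2 * √ε) x)) φ := by
    unfold Hstar
    rw [Hker_clamp hψ he0 f g]
  obtain ⟨hi, h0, hb, hz⟩ := hD ε he0 (by linarith) _ _ φ hn (niceP_of he0 hφ)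
  have hL : 1 ≤ Real.log (1 / ε) := by
    rw [Real.le_log_iff_exp_le (by positivity), le_div_iff₀ he0]
    have := Real.exp_one_lt_d9
    nlinarith
  have hh' : Measurable ((Ioo (-(2 * √ε)) (2 * √ε)).indicator h) := hh.indicator measurableSet_Ioo
  have hM' : ∀ x, |(Ioo (-(2 * √ε)) (2 * √ε)).indicator h x| ≤ M := by
    intro x
    by_cases hx : x ∈ Ioo (-(2 * √ε)) (2 * √ε)
    · rw [indicator_of_mem hx]; exact hM x hx
    · rw [indicator_of_notMem hx, abs_zero]; exact hM0
  obtain ⟨a1, a2⟩ := hC1 ε he0 he1 _ _ hn _ M hh' hM'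
  obtain ⟨b1, b2⟩ := hC1 ε he0 he1 _ _ hn.symm _ M hh' hM'
  have r1 := pair_bd he0 hM0 hC10.le (by positivity : 0 ≤ 10 * A) hD0.le hL
    (fun a _ => a1 a) a2 hi h0 hb hz
  have r2 := pair_bd he0 hM0 hC10.le (by positivity : 0 ≤ 10 * A) hD0.le hL
    (fun a _ => b1 a) b2 hi h0 hb hz
  have e1 : ∀ α, (Mop ψ ε f g h α - T3 ψ ε f g h α) * Hstar ψ ε f g φ α =
      (Mop ψ ε (fun x => f (clampR (2 * √ε) x)) (fun x => g (clampR (2 * √ε) x))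
        ((Ioo (-(2 * √ε)) (2 * √ε)).indicator h) α -
      T3 ψ ε (fun x => f (clampR (2 * √ε) x)) (fun x => g (clampR (2 * √ε) x))
        ((Ioo (-(2 * √ε)) (2 * √ε)).indicator h) α) *
      Hstar ψ ε (fun x => f (clampR (2 * √ε) x)) (fun x => g (clampR (2 * √ε) x)) φ α := by
    intro α
    rw [hHs]
    by_cases c : √ε < |α| * 32
    · rw [hz α c]; simp
    · rw [Mop_clamp hψ he0 f g h (by linarith), T3_clamp hψ he0 f g h (by linarith)]
  have e2 : ∀ α, (Mop ψ ε f g h α - T3 ψ ε g f h α) * Hstar ψ ε f g φ α =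
      (Mop ψ ε (fun x => g (clampR (2 * √ε) x)) (fun x => f (clampR (2 * √ε) x))
        ((Ioo (-(2 * √ε)) (2 * √ε)).indicator h) α -
      T3 ψ ε (fun x => g (clampR (2 * √ε) x)) (fun x => f (clampR (2 * √ε) x))
        ((Ioo (-(2 * √ε)) (2 * √ε)).indicator h) α) *
      Hstar ψ ε (fun x => f (clampR (2 * √ε) x)) (fun x => g (clampR (2 * √ε) x)) φ α := by
    intro α
    rw [hHs]
    by_cases c : √ε < |α| * 32
    · rw [hz α c]; simp
    · rw [Mop_symm ψ ε f g, Mop_clamp hψ he0 g f h (by linarith),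
        T3_clamp hψ he0 g f h (by linarith)]
  simp only [e1, e2]
  linarith
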